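/- arXiv:0909.5200 — 10 statements merged into one kernel-verified Lean document; each statement's English description precedes it below -/
import Mathlib

section
/- (Structure of commuting projectors, Bravyi–Vyalyi.) Let A, B, C be nonempty finite types and let P and Q be commuting orthogonal projectors (Hermitian idempotent complex matrices) indexed by A × B × C, such that P = P_AB ⊗ I_C for some matrix P_AB indexed by A × B, and Q = I_A ⊗ Q_BC for some matrix Q_BC indexed by B × C (Kronecker products with respect to the natural reindexings of A × B × C). Then there exist a finite index set X, finite types B'_x and B''_x for each x ∈ X, a unitary matrix U identifying ℂ^B with the direct sum over x ∈ X of ℂ^{B'_x} ⊗ ℂ^{B''_x} (i.e., a unitary U : Matrix B (Σ x, B'_x × B''_x) ℂ), and for each x ∈ X orthogonal projectors P_x indexed by A × B'_x and Q_x indexed by B''_x × C, such that conjugating the product PQ by I_A ⊗ U ⊗ I_C yields the block-diagonal matrix whose x-th block, on indices A × (B'_x × B''_x) × C, is the Kronecker product of P_x (acting on the A and B'_x factors) with Q_x (acting on the B''_x and C factors). Some of the projectors P_x, Q_x may be zero. -/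
/-!
Write `P_AB = ∑ |a⟩⟨a'| ⊗ M a a'` and `Q_BC = ∑ R c c' ⊗ |c⟩⟨c'|` with `M a a'` and `R c c'`
operators on `ℂ^B`. Comparing entries, `P Q = Q P` says that every `M a a'` commutes with every
`R c c'`, and hermiticity of `P` says that the set `S` of all `M a a'` is closed under adjoints. So
it suffices to decompose `ℂ^B` orthogonally into pieces `ℂ^n ⊗ ℂ^m` on which `S` acts as
`p ⊗ I` and the commutant of `S` as `I ⊗ q`; these `p` and `q` then form the entries of
the required projectors, and `M a a' * R c c'` acts on each piece as `p ⊗ q`.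

The decomposition is the finite-dimensional structure theorem for self-adjoint sets of operators
(`exists_splits_blocks`), obtained by splitting off one isotypic component at a time. In a non-zero
subspace invariant under `S` and its commutant `S'`, let `W` be a minimal `S`-invariant subspace
with orthonormal basis `w_u`, fix a unit vector `w_0` of `W`, and choose `t_j ∈ S'` such that the
`t_j w_0` form an orthonormal basis of `S' w_0`. By Schur's lemma
(`exists_inner_eq_of_minimal`) `⟪t_j w, t_k w'⟫` is a multiple of `⟪w, w'⟫` on `W`, and taking
`w = w' = w_0` shows the factor to be `δ_jk`; so the vectors `t_j w_u` are orthonormal. Elements of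
`S` act on the index `u` because they commute with `t_j`. For `r ∈ S'` one has
`r t_j w_0 = ∑ q_kj t_k w_0`, and this extends from `w_0` to all of `W` because an element of `S'`
that kills `w_0` kills `W`. Hence `S'` acts on the index `j` (`exists_splits_block`). The orthogonal
complement of the span is again invariant under `S` and `S'`, both being closed under adjoints.
-/


open Matrix

noncomputable section

/-! ### Orthogonal decomposition for a self-adjoint set of operators -/

section Blocks

variable {E : Type*} [NormedAddCommGroup E] [InnerProductSpace ℂ E]

/-- The subspace `W` is mapped into itself by every operator of `S`. -/
def Invariant (S : Set (E →L[ℂ] E)) (W : Submodule ℂ E) : Prop :=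
  ∀ s ∈ S, ∀ w ∈ W, s w ∈ W

/-- A doubly indexed finite family of vectors `e u v`, thought of as the images of the product
vectors `e_u ⊗ e_v` under a linear map `ℂ^n ⊗ ℂ^m → E`. -/
structure Block (E : Type*) where
  /-- dimension of the first tensor factor -/
  n : ℕ
  /-- dimension of the second tensor factor -/
  m : ℕ
  /-- the vectors of the family -/
  e : Fin n → Fin m → E

/-- The subspace spanned by the vectors of a block. -/
def Block.span (b : Block E) : Submodule ℂ E :=
  Submodule.span ℂ (Set.range fun i : Fin b.n × Fin b.m => b.e i.1 i.2)

/-- The block embeds `ℂ^n ⊗ ℂ^m` isometrically and non-trivially in `E`, in such a way that `S`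
acts on the first tensor factor only and the commutant of `S` on the second factor only. -/
structure Block.Splits (S : Set (E →L[ℂ] E)) (b : Block E) : Prop where
  n_pos : 0 < b.n
  m_pos : 0 < b.m
  inner_eq : ∀ u v u' v', inner ℂ (b.e u v) (b.e u' v') = if u = u' ∧ v = v' then (1 : ℂ) else 0
  left : ∀ s ∈ S, ∃ p : Matrix (Fin b.n) (Fin b.n) ℂ,
    ∀ u v, s (b.e u v) = ∑ u', p u' u • b.e u' v
  right : ∀ t ∈ Subalgebra.centralizer ℂ S, ∃ q : Matrix (Fin b.m) (Fin b.m) ℂ,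
    ∀ u v, t (b.e u v) = ∑ v', q v' v • b.e u v'

lemma mem_centralizer_apply {S : Set (E →L[ℂ] E)} {t : E →L[ℂ] E}
    (ht : t ∈ Subalgebra.centralizer ℂ S) {s : E →L[ℂ] E} (hs : s ∈ S) (x : E) :
    s (t x) = t (s x) :=
  congrArg (fun f : E →L[ℂ] E => f x) ((Subalgebra.mem_centralizer_iff ℂ).1 ht s hs)

lemma Block.mem_span (b : Block E) (u : Fin b.n) (v : Fin b.m) : b.e u v ∈ b.span :=
  Submodule.subset_span ⟨(u, v), rfl⟩

lemma Block.invariant_span {S : Set (E →L[ℂ] E)} (b : Block E)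
    (h : ∀ s ∈ S, ∀ u v, s (b.e u v) ∈ b.span) : Invariant S b.span := by
  intro s hs
  have : b.span ≤ b.span.comap s.toLinearMap := by
    refine Submodule.span_le.2 ?_
    rintro _ ⟨⟨u, v⟩, rfl⟩
    exact h s hs u v
  exact fun x hx => this hx

/-- The eigenspaces of an operator in the commutant of `S` are `S`-invariant, hence a minimal
invariant subspace meeting one of them non-trivially lies inside it. -/
lemma apply_eq_smul_of_minimal {S : Set (E →L[ℂ] E)} {W : Submodule ℂ E} (hW : Invariant S W)
    (hmin : ∀ W' ≤ W, W' ≠ ⊥ → Invariant S W' → W ≤ W')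
    {t : E →L[ℂ] E} (ht : t ∈ Subalgebra.centralizer ℂ S) {μ : ℂ} {w₀ : E} (hw₀ : w₀ ∈ W)
    (hne : w₀ ≠ 0) (h₀ : t w₀ = μ • w₀) {w : E} (hw : w ∈ W) : t w = μ • w := by
  let W' : Submodule ℂ E := W ⊓ LinearMap.ker (t - μ • (1 : E →L[ℂ] E)).toLinearMap
  have hmem : ∀ x, x ∈ W' ↔ x ∈ W ∧ t x = μ • x := by
    intro x
    simp [W', sub_eq_zero]
  refine ((hmem w).1 (hmin W' inf_le_left ?_ ?_ hw)).2
  · intro h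
    exact hne ((Submodule.eq_bot_iff _).1 h w₀ ((hmem _).2 ⟨hw₀, h₀⟩))
  · intro s hs x hx
    rw [hmem] at hx ⊢
    refine ⟨hW s hs x hx.1, ?_⟩
    rw [← mem_centralizer_apply ht hs, hx.2, map_smul]

variable [FiniteDimensional ℂ E]

lemma star_mem_centralizer_of_star_mem {S : Set (E →L[ℂ] E)} (hS : ∀ s ∈ S, star s ∈ S)
    {t : E →L[ℂ] E} (ht : t ∈ Subalgebra.centralizer ℂ S) :
    star t ∈ Subalgebra.centralizer ℂ S := by
  rw [Subalgebra.mem_centralizer_iff] at ht ⊢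
  intro s hs
  have := congrArg star (ht _ (hS s hs))
  simpa using this.symm

lemma Invariant.orthogonal {S : Set (E →L[ℂ] E)} (hS : ∀ s ∈ S, star s ∈ S)
    {W : Submodule ℂ E} (hW : Invariant S W) : Invariant S Wᗮ := by
  intro s hs x hx
  rw [Submodule.mem_orthogonal] at hx ⊢
  intro w hw
  have := hx _ (hW _ (hS s hs) w hw)
  rwa [ContinuousLinearMap.star_eq_adjoint, ContinuousLinearMap.adjoint_inner_left] at this

lemma starProjection_mem_centralizer {S : Set (E →L[ℂ] E)} (hS : ∀ s ∈ S, star s ∈ S)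
    {W : Submodule ℂ E} (hW : Invariant S W) :
    W.starProjection ∈ Subalgebra.centralizer ℂ S := by
  rw [Subalgebra.mem_centralizer_iff]
  intro s hs
  ext x
  refine (Submodule.eq_starProjection_of_mem_orthogonal
    (hW s hs _ (Submodule.starProjection_apply_mem W x)) ?_).symm
  change s x - s (W.starProjection x) ∈ Wᗮ
  rw [← map_sub]
  exact hW.orthogonal hS s hs _ (Submodule.sub_starProjection_mem_orthogonal x)

/-- Schur's lemma: compressed to a minimal invariant subspace, the commutant is scalar. -/
lemma exists_inner_eq_of_minimal {S : Set (E →L[ℂ] E)} (hS : ∀ s ∈ S, star s ∈ S)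
    {W : Submodule ℂ E} (hW : Invariant S W) (hne : W ≠ ⊥)
    (hmin : ∀ W' ≤ W, W' ≠ ⊥ → Invariant S W' → W ≤ W')
    {t : E →L[ℂ] E} (ht : t ∈ Subalgebra.centralizer ℂ S) :
    ∃ c : ℂ, ∀ w ∈ W, ∀ w' ∈ W, inner ℂ w (t w') = c * inner ℂ w w' := by
  have hk : W.starProjection * t ∈ Subalgebra.centralizer ℂ S :=
    mul_mem (starProjection_mem_centralizer hS hW) ht
  have hkW : ∀ x ∈ W, (W.starProjection * t).toLinearMap x ∈ W := fun x _ =>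
    Submodule.starProjection_apply_mem W (t x)
  have : Nontrivial W := Submodule.nontrivial_iff_ne_bot.2 hne
  obtain ⟨μ, hμ⟩ := Module.End.exists_eigenvalue
    ((W.starProjection * t).toLinearMap.restrict hkW)
  obtain ⟨w₀, hw₀⟩ := hμ.exists_hasEigenvector
  have h₀ : (W.starProjection * t) (w₀ : E) = μ • (w₀ : E) :=
    congrArg Subtype.val hw₀.apply_eq_smul
  refine ⟨μ, fun w hw w' hw' => ?_⟩
  have key := apply_eq_smul_of_minimal hW hmin hk w₀.2 (by simpa using hw₀.2) h₀ hw'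
  calc inner ℂ w (t w') = inner ℂ (W.starProjection w) (t w') := by
        rw [Submodule.starProjection_eq_self_iff.2 hw]
    _ = inner ℂ w ((W.starProjection * t) w') :=
        Submodule.inner_starProjection_left_eq_right W w (t w')
    _ = μ * inner ℂ w w' := by rw [key, inner_smul_right]

lemma exists_orthonormal_expansion {W : Submodule ℂ E} (hW : W ≠ ⊥) :
    ∃ (n : ℕ) (w : Fin n → E), 0 < n ∧ (∀ i, w i ∈ W) ∧
      (∀ i j, inner ℂ (w i) (w j) = if i = j then (1 : ℂ) else 0) ∧
      ∀ x ∈ W, x = ∑ i, (inner ℂ (w i) x : ℂ) • w i := by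
  have hnt : Nontrivial W := Submodule.nontrivial_iff_ne_bot.2 hW
  let w := stdOrthonormalBasis ℂ W
  refine ⟨_, fun i => w i, Module.finrank_pos (R := ℂ) (M := W), fun i => (w i).2,
    orthonormal_iff_ite.1 w.orthonormal, fun x hx => ?_⟩
  have h := congrArg Subtype.val (w.sum_repr' ⟨x, hx⟩)
  simp only [AddSubmonoidClass.coe_finsetSum, Submodule.coe_smul, Submodule.coe_inner] at h
  exact h.symm

/-- A non-zero subspace invariant under `S` and its commutant contains a split block. With `W` a
minimal `S`-invariant subspace, `w_u` an orthonormal basis of it and `t_j w_0` an orthonormal basis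
of the orbit of `w_0` under the commutant, the vectors `t_j w_u` form the block. -/
lemma exists_splits_block {S : Set (E →L[ℂ] E)} (hS : ∀ s ∈ S, star s ∈ S)
    {K : Submodule ℂ E} (hK : K ≠ ⊥) (hKS : Invariant S K)
    (hKT : Invariant (Subalgebra.centralizer ℂ S : Set (E →L[ℂ] E)) K) :
    ∃ b : Block E, b.Splits S ∧ b.span ≤ K := by
  obtain ⟨W, ⟨hWK, hne, hW⟩, hWmin⟩ := exists_minimal_of_wellFoundedLT
    (fun W : Submodule ℂ E => W ≤ K ∧ W ≠ ⊥ ∧ Invariant S W) ⟨K, le_rfl, hK, hKS⟩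
  have hmin : ∀ W' ≤ W, W' ≠ ⊥ → Invariant S W' → W ≤ W' := fun W' h1 h2 h3 =>
    hWmin ⟨h1.trans hWK, h2, h3⟩ h1
  obtain ⟨n, w, hn, hwW, hwo, hwx⟩ := exists_orthonormal_expansion hne
  obtain ⟨w₀, hw₀W, hw₀1⟩ : ∃ w₀ ∈ W, inner ℂ w₀ w₀ = (1 : ℂ) :=
    ⟨w ⟨0, hn⟩, hwW _, by simp only [hwo, if_true]⟩
  have hw₀ne : w₀ ≠ 0 := by
    rintro rfl
    simp at hw₀1
  let F : Submodule ℂ E := (Subalgebra.toSubmodule (Subalgebra.centralizer ℂ S)).map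
    (ContinuousLinearMap.apply ℂ E w₀).toLinearMap
  have hF : ∀ x, x ∈ F ↔ ∃ t ∈ Subalgebra.centralizer ℂ S, t w₀ = x := by
    intro x
    simp [F, Submodule.mem_map]
  have hFne : F ≠ ⊥ := fun h =>
    hw₀ne ((Submodule.eq_bot_iff _).1 h w₀ ((hF _).2 ⟨1, one_mem _, rfl⟩))
  obtain ⟨m, f, hm, hfF, hfo, hfx⟩ := exists_orthonormal_expansion hFne
  choose t ht htf using fun j => (hF _).1 (hfF j)
  refine ⟨⟨n, m, fun u j => t j (w u)⟩, ⟨hn, hm, ?_, ?_, ?_⟩, ?_⟩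
  · intro u j u' j'
    obtain ⟨c, hc⟩ := exists_inner_eq_of_minimal hS hW hne hmin
      (mul_mem (star_mem_centralizer_of_star_mem hS (ht j)) (ht j'))
    have hinner : ∀ x y, inner ℂ x ((star (t j) * t j') y) = inner ℂ (t j x) (t j' y) := by
      intro x y
      rw [mul_apply_eq_comp, ContinuousLinearMap.star_eq_adjoint,
        ContinuousLinearMap.adjoint_inner_right]
    simp only [hinner] at hc
    -- evaluating at `w₀` identifies the Schur scalar as an inner product of basis vectors
    have hcj : c = if j = j' then 1 else 0 := by
      have h1 := hc _ hw₀W _ hw₀W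
      rw [hw₀1, mul_one, htf, htf, hfo] at h1
      exact h1.symm
    change inner ℂ (t j (w u)) (t j' (w u')) = _
    rw [hc _ (hwW u) _ (hwW u'), hwo, hcj]
    by_cases hu : u = u' <;> by_cases hj : j = j' <;> simp [hu, hj]
  · intro s hs
    refine ⟨fun u' u => inner ℂ (w u') (s (w u)), fun u j => ?_⟩
    change s (t j (w u)) = ∑ u', (inner ℂ (w u') (s (w u)) : ℂ) • t j (w u')
    rw [mem_centralizer_apply (ht j) hs]
    conv_lhs => rw [hwx _ (hW s hs _ (hwW u))]
    simp only [map_sum, map_smul]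
  · intro r hr
    refine ⟨fun j' j => inner ℂ (f j') (r (f j)), fun u j => ?_⟩
    change r (t j (w u)) = ∑ j', (inner ℂ (f j') (r (f j)) : ℂ) • t j' (w u)
    have h : r (f j) = ∑ j', (inner ℂ (f j') (r (f j)) : ℂ) • f j' :=
      hfx _ ((hF _).2 ⟨r * t j, mul_mem hr (ht j), congrArg r (htf j)⟩)
    -- the two sides differ by a commutant element killing `w₀`, which therefore kills `W`
    have h0 := apply_eq_smul_of_minimal hW hmin (μ := 0)
      (t := r * t j - ∑ j', (inner ℂ (f j') (r (f j)) : ℂ) • t j')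
      (sub_mem (mul_mem hr (ht j)) (sum_mem fun j' _ => Subalgebra.smul_mem _ (ht j') _))
      hw₀W hw₀ne
      (by
        rw [zero_smul, _root_.sub_apply, _root_.sum_apply, sub_eq_zero]
        simpa only [_root_.smul_apply, mul_apply_eq_comp, htf] using h)
      (hwW u)
    rw [zero_smul, _root_.sub_apply, _root_.sum_apply, sub_eq_zero] at h0
    exact h0
  · refine Submodule.span_le.2 ?_
    rintro _ ⟨⟨u, j⟩, rfl⟩
    exact hKT _ (ht j) _ (hWK (hwW u))

/-- Splitting off one block after another exhausts any subspace invariant under `S` and its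
commutant. -/
lemma exists_splits_blocks {S : Set (E →L[ℂ] E)} (hS : ∀ s ∈ S, star s ∈ S)
    (K : Submodule ℂ E) (hKS : Invariant S K)
    (hKT : Invariant (Subalgebra.centralizer ℂ S : Set (E →L[ℂ] E)) K) :
    ∃ (N : ℕ) (b : Fin N → Block E), (∀ x, (b x).Splits S) ∧
      (∀ x y, x ≠ y → (b x).span ⟂ (b y).span) ∧ (⨆ x, (b x).span) = K := by
  induction K using WellFoundedLT.induction with
  | ind K ih =>
    by_cases hK : K = ⊥
    · subst hK
      exact ⟨0, Fin.elim0, fun x => x.elim0, fun x => x.elim0, by simp⟩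
    obtain ⟨b, hb, hbK⟩ := exists_splits_block hS hK hKS hKT
    have hbS : Invariant S b.span := b.invariant_span fun s hs u v => by
      obtain ⟨p, hp⟩ := hb.left s hs
      rw [hp]
      exact sum_mem fun u' _ => Submodule.smul_mem _ _ (b.mem_span _ _)
    have hbT : Invariant (Subalgebra.centralizer ℂ S : Set (E →L[ℂ] E)) b.span :=
      b.invariant_span fun t ht u v => by
        obtain ⟨q, hq⟩ := hb.right t ht
        rw [hq]
        exact sum_mem fun u' _ => Submodule.smul_mem _ _ (b.mem_span _ _)
    have hlt : b.spanᗮ ⊓ K < K := by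
      refine inf_lt_right.2 fun hle => ?_
      have hmem := b.mem_span ⟨0, hb.n_pos⟩ ⟨0, hb.m_pos⟩
      have h0 := (Submodule.mem_orthogonal _ _).1 (hle (hbK hmem)) _ hmem
      rw [hb.inner_eq, if_pos ⟨rfl, rfl⟩] at h0
      exact one_ne_zero h0
    obtain ⟨N, b', hb', horth, hsup⟩ := ih _ hlt
      (fun s hs x hx => ⟨hbS.orthogonal hS s hs x hx.1, hKS s hs x hx.2⟩)
      (fun s hs x hx => ⟨hbT.orthogonal (fun t ht => star_mem_centralizer_of_star_mem hS ht)
        s hs x hx.1, hKT s hs x hx.2⟩)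
    have h0 : ∀ y, b.span ⟂ (b' y).span := fun y =>
      (Submodule.isOrtho_orthogonal_right b.span).mono_right
        ((le_iSup (fun x => (b' x).span) y).trans (hsup.le.trans inf_le_left))
    refine ⟨N + 1, Fin.cons b b', Fin.cases hb hb', ?_, ?_⟩
    · refine Fin.cases (Fin.cases (fun h => absurd rfl h) fun y _ => h0 y) fun x =>
        Fin.cases (fun _ => (h0 x).symm) fun y hxy => horth x y fun h => hxy (h ▸ rfl)
    · rw [← Submodule.sup_orthogonal_inf_of_hasOrthogonalProjection hbK, ← hsup]
      let c : Fin (N + 1) → Block E := Fin.cons b b'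
      refine le_antisymm (iSup_le (Fin.cases le_sup_left fun x => ?_))
        (sup_le (le_iSup (fun x => (c x).span) 0)
          (iSup_le fun x => le_iSup (fun x => (c x).span) x.succ))
      exact (le_iSup (fun x => (b' x).span) x).trans le_sup_right

/-! ### Matrix entries -/

/-- If the operators `T a a'` are the blocks of a projector and act on an orthonormal family `e`
through the matrices `p a a'`, then these matrices are the blocks of a projector too. -/
lemma projector_entries {A : Type*} [Fintype A] {n : ℕ} {e : Fin n → E}
    (he : ∀ u u', inner ℂ (e u) (e u') = if u = u' then (1 : ℂ) else 0)
    {T : A → A → E →L[ℂ] E} (hstar : ∀ a a', star (T a a') = T a' a)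
    (hmul : ∀ a a', ∑ a'', T a a'' * T a'' a' = T a a')
    {p : A → A → Matrix (Fin n) (Fin n) ℂ}
    (hp : ∀ a a' u, T a a' (e u) = ∑ u', p a a' u' u • e u') :
    (∀ a a' u u', star (p a' a u' u) = p a a' u u') ∧
    ∀ a a' u u', ∑ a'', ∑ u'', p a a'' u u'' * p a'' a' u'' u' = p a a' u u' := by
  have hentry : ∀ a a' u u', inner ℂ (e u) (T a a' (e u')) = p a a' u u' := by
    intro a a' u u'
    simp [hp, he]
  refine ⟨fun a a' u u' => ?_, fun a a' u u' => ?_⟩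
  · rw [← hentry, ← hentry, ← hstar a' a, ContinuousLinearMap.star_eq_adjoint,
      ContinuousLinearMap.adjoint_inner_right]
    exact inner_conj_symm _ _
  · rw [← hentry, ← hmul, _root_.sum_apply, inner_sum]
    refine Finset.sum_congr rfl fun a'' _ => ?_
    rw [mul_apply_eq_comp, hp, map_sum, inner_sum]
    refine Finset.sum_congr rfl fun u'' _ => ?_
    rw [map_smul, inner_smul_right, hentry, mul_comm]

end Blocks

lemma inner_toEuclideanCLM_eq_sum {B : Type*} [Fintype B] [DecidableEq B] (Z : Matrix B B ℂ)
    (x y : EuclideanSpace ℂ B) :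
    inner ℂ x (Matrix.toEuclideanCLM (𝕜 := ℂ) Z y) = ∑ b, ∑ b', star (x b) * Z b b' * y b' := by
  rw [EuclideanSpace.inner_eq_star_dotProduct, Matrix.ofLp_toEuclideanCLM]
  simp only [dotProduct, mulVec, Finset.sum_mul, Pi.star_apply]
  exact Finset.sum_congr rfl fun b _ => Finset.sum_congr rfl fun b' _ => by ring

/-- Entries of a conjugate by `I_A ⊗ U ⊗ I_C`. -/
lemma conj_entry {A B C D : Type*} [Fintype A] [Fintype B] [Fintype C]
    [DecidableEq A] [DecidableEq C]
    (Z : Matrix (A × B × C) (A × B × C) ℂ) (U : Matrix B D ℂ)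
    (V : Matrix (A × B × C) (A × D × C) ℂ)
    (hV : ∀ (a a' : A) (b : B) (c c' : C) (s : D), V (a, b, c) (a', s, c') =
      (if a = a' then (1 : ℂ) else 0) * U b s * (if c = c' then (1 : ℂ) else 0))
    (a a' : A) (s s' : D) (c c' : C) :
    (Vᴴ * Z * V) (a, s, c) (a', s', c') =
      ∑ b, ∑ b', star (U b s) * Z (a, b, c) (a', b', c') * U b' s' := by
  simp only [Matrix.mul_apply, conjTranspose_apply, Fintype.sum_prod_type, hV]
  simp only [apply_ite star, star_zero, mul_ite, ite_mul, mul_one, one_mul,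
    mul_zero, zero_mul, Finset.sum_ite_eq', Finset.sum_ite_irrel, Finset.sum_const_zero,
    Finset.mem_univ, if_true, Finset.sum_mul]
  exact Finset.sum_comm

/-! ### Commuting projectors -/

/-- **Structure of commuting projectors** (Bravyi–Vyalyi). Let `P, Q` be commuting
orthogonal projectors on `ℂ^(A × B × C)` with `P = P_AB ⊗ I_C` and `Q = I_A ⊗ Q_BC`.
Then there are a finite index set `X = Fin N`, finite types `B'_x = Fin (b1 x)` and
`B''_x = Fin (b2 x)`, a unitary `U : ℂ^B ≃ ⊕_x ℂ^{B'_x} ⊗ ℂ^{B''_x}`, and orthogonal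
projectors `Px x` on `A × B'_x` and `Qx x` on `B''_x × C`, such that conjugating `P Q`
by `I_A ⊗ U ⊗ I_C` yields the block-diagonal matrix whose `x`-th block is the Kronecker
product of `Px x` and `Qx x` (and whose off-diagonal blocks vanish). -/
theorem commuting_projector_structure
    {A B C : Type*} [Fintype A] [Fintype B] [Fintype C]
    [DecidableEq A] [DecidableEq B] [DecidableEq C]
    [Nonempty A] [Nonempty B] [Nonempty C]
    (P Q : Matrix (A × B × C) (A × B × C) ℂ)
    (hPherm : P.IsHermitian) (hPidem : P * P = P)
    (hQherm : Q.IsHermitian) (hQidem : Q * Q = Q)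
    (hcomm : P * Q = Q * P)
    (PAB : Matrix (A × B) (A × B) ℂ)
    (hP : ∀ a b c a' b' c', P (a, b, c) (a', b', c') =
      PAB (a, b) (a', b') * (if c = c' then (1 : ℂ) else 0))
    (QBC : Matrix (B × C) (B × C) ℂ)
    (hQ : ∀ a b c a' b' c', Q (a, b, c) (a', b', c') =
      (if a = a' then (1 : ℂ) else 0) * QBC (b, c) (b', c')) :
    ∃ (N : ℕ) (b1 b2 : Fin N → ℕ)
      (U : Matrix B (Σ x : Fin N, Fin (b1 x) × Fin (b2 x)) ℂ),
      Uᴴ * U = 1 ∧ U * Uᴴ = 1 ∧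
      ∃ (Px : ∀ x : Fin N, Matrix (A × Fin (b1 x)) (A × Fin (b1 x)) ℂ)
        (Qx : ∀ x : Fin N, Matrix (Fin (b2 x) × C) (Fin (b2 x) × C) ℂ),
        (∀ x, (Px x).IsHermitian ∧ Px x * Px x = Px x) ∧
        (∀ x, (Qx x).IsHermitian ∧ Qx x * Qx x = Qx x) ∧
        ∀ V : Matrix (A × B × C) (A × (Σ x : Fin N, Fin (b1 x) × Fin (b2 x)) × C) ℂ,
          (∀ (a a' : A) (b : B) (c c' : C) (s : Σ x : Fin N, Fin (b1 x) × Fin (b2 x)),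
            V (a, b, c) (a', s, c') =
              (if a = a' then (1 : ℂ) else 0) * U b s *
                (if c = c' then (1 : ℂ) else 0)) →
          (∀ (a a' : A) (c c' : C) (x : Fin N)
              (u u' : Fin (b1 x)) (v v' : Fin (b2 x)),
            (Vᴴ * (P * Q) * V) (a, ⟨x, (u, v)⟩, c) (a', ⟨x, (u', v')⟩, c') =
              Px x (a, u) (a', u') * Qx x (v, c) (v', c')) ∧
          (∀ (a a' : A) (c c' : C)
              (s s' : Σ x : Fin N, Fin (b1 x) × Fin (b2 x)), s.1 ≠ s'.1 →
            (Vᴴ * (P * Q) * V) (a, s, c) (a', s', c') = 0) := by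
  obtain ⟨a₀⟩ := ‹Nonempty A›
  obtain ⟨c₀⟩ := ‹Nonempty C›
  let M : A → A → Matrix B B ℂ := fun a a' b b' => PAB (a, b) (a', b')
  let R : C → C → Matrix B B ℂ := fun c c' b b' => QBC (b, c) (b', c')
  have hM : ∀ a b c a' b' c', P (a, b, c) (a', b', c') =
      M a a' b b' * (if c = c' then (1 : ℂ) else 0) := hP
  have hR : ∀ a b c a' b' c', Q (a, b, c) (a', b', c') =
      (if a = a' then (1 : ℂ) else 0) * R c c' b b' := hQ
  have hMstar : ∀ a a', star (M a a') = M a' a := by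
    intro a a'
    ext b b'
    have := hPherm.apply (a', b, c₀) (a, b', c₀)
    simpa [hM] using this
  have hRstar : ∀ c c', star (R c c') = R c' c := by
    intro c c'
    ext b b'
    have := hQherm.apply (a₀, b, c') (a₀, b', c)
    simpa [hR] using this
  have hMmul : ∀ a a', ∑ a'', M a a'' * M a'' a' = M a a' := by
    intro a a'
    ext b b'
    have := congrFun₂ hPidem (a, b, c₀) (a', b', c₀)
    simpa [hM, Matrix.mul_apply, Fintype.sum_prod_type, Matrix.sum_apply] using this
  have hRmul : ∀ c c', ∑ c'', R c c'' * R c'' c' = R c c' := by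
    intro c c'
    ext b b'
    have := congrFun₂ hQidem (a₀, b, c) (a₀, b', c')
    rw [← mul_one (R c c' b b'), ← one_mul (R c c' b b' * 1)]
    simp only [hR, Matrix.mul_apply, Fintype.sum_prod_type, Matrix.sum_apply] at this ⊢
    rw [Finset.sum_comm]
    simpa using this
  have hPQ : ∀ a b c a' b' c', (P * Q) (a, b, c) (a', b', c') = (M a a' * R c c') b b' := by
    intro a b c a' b' c'
    simp [hM, hR, Matrix.mul_apply, Fintype.sum_prod_type]
  have hQP : ∀ a b c a' b' c', (Q * P) (a, b, c) (a', b', c') = (R c c' * M a a') b b' := by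
    intro a b c a' b' c'
    simp [hM, hR, Matrix.mul_apply, Fintype.sum_prod_type]
  have hMR : ∀ a a' c c', M a a' * R c c' = R c c' * M a a' := by
    intro a a' c c'
    ext b b'
    rw [← hPQ, ← hQP, hcomm]
  let Φ := Matrix.toEuclideanCLM (𝕜 := ℂ) (n := B)
  let S : Set (EuclideanSpace ℂ B →L[ℂ] EuclideanSpace ℂ B) :=
    Set.range fun i : A × A => Φ (M i.1 i.2)
  have hMS : ∀ a a', Φ (M a a') ∈ S := fun a a' => ⟨(a, a'), rfl⟩
  have hRS : ∀ c c', Φ (R c c') ∈ Subalgebra.centralizer ℂ S := by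
    intro c c'
    rw [Subalgebra.mem_centralizer_iff]
    rintro _ ⟨⟨a, a'⟩, rfl⟩
    rw [← map_mul, ← map_mul, hMR]
  have hS : ∀ s ∈ S, star s ∈ S := by
    rintro _ ⟨⟨a, a'⟩, rfl⟩
    rw [← map_star, hMstar]
    exact hMS a' a
  obtain ⟨N, b, hb, horth, hsup⟩ := exists_splits_blocks hS ⊤
    (fun _ _ _ _ => Submodule.mem_top) (fun _ _ _ _ => Submodule.mem_top)
  let e : (Σ x : Fin N, Fin (b x).n × Fin (b x).m) → EuclideanSpace ℂ B :=
    fun s => (b s.1).e s.2.1 s.2.2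
  have hne : ∀ s s', s.1 ≠ s'.1 → inner ℂ (e s) (e s') = (0 : ℂ) := fun s s' h =>
    Submodule.isOrtho_iff_inner_eq.1 (horth _ _ h) _ ((b s.1).mem_span _ _) _
      ((b s'.1).mem_span _ _)
  have he : Orthonormal ℂ e := by
    rw [orthonormal_iff_ite]
    rintro ⟨x, u, v⟩ ⟨x', u', v'⟩
    by_cases h : x = x'
    · subst h
      simpa using (hb x).inner_eq u v u' v'
    · rw [if_neg fun h' => h (congrArg Sigma.fst h')]
      exact hne ⟨x, u, v⟩ ⟨x', u', v'⟩ h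
  have hspan : ⊤ ≤ Submodule.span ℂ (Set.range e) := by
    rw [← hsup]
    refine iSup_le fun x => Submodule.span_mono ?_
    rintro _ ⟨i, rfl⟩
    exact ⟨⟨x, i⟩, rfl⟩
  -- as `m` and `n` are positive, the matrices `p` and `q` can be read off from a single row or column
  -- of each block, so `projector_entries` applies to them
  choose p hp using fun x a a' => (hb x).left _ (hMS a a')
  choose q hq using fun x c c' => (hb x).right _ (hRS c c')
  have hp' := fun x => projector_entries
    (e := fun u => (b x).e u ⟨0, (hb x).m_pos⟩) (T := fun a a' => Φ (M a a')) (p := p x)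
    (fun u u' => by simp [(hb x).inner_eq])
    (fun a a' => by rw [← map_star, hMstar])
    (fun a a' => by simp only [← map_mul, ← map_sum, hMmul])
    (fun a a' u => hp x a a' u _)
  have hq' := fun x => projector_entries
    (e := fun v => (b x).e ⟨0, (hb x).n_pos⟩ v) (T := fun c c' => Φ (R c c')) (p := q x)
    (fun u u' => by simp [(hb x).inner_eq])
    (fun a a' => by rw [← map_star, hRstar])
    (fun a a' => by simp only [← map_mul, ← map_sum, hRmul])
    (fun c c' v => hq x c c' _ v)
  have hact : ∀ a a' c c' x u v, Φ (M a a' * R c c') ((b x).e u v) =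
      ∑ v', ∑ u', (q x c c' v' v * p x a a' u' u) • (b x).e u' v' := by
    intro a a' c c' x u v
    rw [map_mul, mul_apply_eq_comp, hq, map_sum]
    simp only [map_smul, hp, Finset.smul_sum, smul_smul]
  -- the columns of `U` are the vectors of the blocks
  let U : Matrix B (Σ x : Fin N, Fin (b x).n × Fin (b x).m) ℂ := fun i s => e s i
  have hUU : Uᴴ * U = 1 := by
    ext s s'
    rw [Matrix.one_apply, ← orthonormal_iff_ite.1 he s s',
      EuclideanSpace.inner_eq_star_dotProduct, Matrix.mul_apply]
    exact Finset.sum_congr rfl fun i _ => mul_comm _ _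
  have hcard : Fintype.card (Σ x : Fin N, Fin (b x).n × Fin (b x).m) = Fintype.card B := by
    rw [← Module.finrank_eq_card_basis (OrthonormalBasis.mk he hspan).toBasis,
      finrank_euclideanSpace]
  refine ⟨N, fun x => (b x).n, fun x => (b x).m, U, hUU,
    (Matrix.mul_eq_one_comm_of_card_eq _ _ _ hcard).1 hUU,
    fun x => Matrix.of fun i j => p x i.1 j.1 i.2 j.2,
    fun x => Matrix.of fun i j => q x i.2 j.2 i.1 j.1, ?_, ?_, ?_⟩
  · refine fun x => ⟨?_, ?_⟩
    · ext ⟨a, u⟩ ⟨a', u'⟩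
      exact (hp' x).1 a a' u u'
    · ext ⟨a, u⟩ ⟨a', u'⟩
      simp only [Matrix.mul_apply, Matrix.of_apply, Fintype.sum_prod_type]
      exact (hp' x).2 a a' u u'
  · refine fun x => ⟨?_, ?_⟩
    · ext ⟨v, c⟩ ⟨v', c'⟩
      exact (hq' x).1 c c' v v'
    · ext ⟨v, c⟩ ⟨v', c'⟩
      simp only [Matrix.mul_apply, Matrix.of_apply, Fintype.sum_prod_type]
      rw [Finset.sum_comm]
      exact (hq' x).2 c c' v v'
  · intro V hV
    have hentry : ∀ a a' c c' s s', (Vᴴ * (P * Q) * V) (a, s, c) (a', s', c') =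
        inner ℂ (e s) (Φ (M a a' * R c c') (e s')) := by
      intro a a' c c' s s'
      rw [conj_entry _ U V hV, inner_toEuclideanCLM_eq_sum]
      simp only [hPQ, U]
    refine ⟨fun a a' c c' x u u' v v' => ?_, fun a a' c c' s s' hss => ?_⟩
    · rw [hentry]
      change inner ℂ ((b x).e u v) (Φ (M a a' * R c c') ((b x).e u' v')) = _
      rw [hact]
      simp only [inner_sum, inner_smul_right, (hb x).inner_eq, ite_and, mul_ite, mul_one, mul_zero,
        Finset.sum_ite_eq, Finset.mem_univ, if_true]
      exact mul_comm _ _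
    · rw [hentry]
      change inner ℂ (e s) (Φ (M a a' * R c c') ((b s'.1).e s'.2.1 s'.2.2)) = _
      rw [hact, inner_sum]
      refine Finset.sum_eq_zero fun v' _ => ?_
      rw [inner_sum]
      refine Finset.sum_eq_zero fun u' _ => ?_
      rw [inner_smul_right]
      have h0 := hne s ⟨s'.1, u', v'⟩ hss
      simp only [e] at h0 ⊢
      rw [h0, mul_zero]
end
end

section
/- Let C ⊆ (Λ → Σ) be a classical code cut out by constraints with supports S_1,…,S_m, with minimum distance ≥ d, and let B_1,…,B_r be pairwise disjoint subsets of Λ such that every support S_a intersects at most one of the sets B_j and |B_j| < d for every j. Then any two codewords x, y ∈ C that agree on A = Λ ∖ (B_1 ∪ … ∪ B_r) are equal. -/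
/-!
For a block `B j`, let `z` be the hybrid word equal to `y` on `B j` and to `x` elsewhere.
A constraint whose support meets `B j` meets no other block, so `z` agrees with `y` on that
support; a constraint whose support misses `B j` sees only `x`. Hence `z` is a codeword. It
differs from `x` only inside `B j`, on fewer than `d` sites, so `z = x`, that is, `x` and `y`
agree on `B j`.
-/

/-- If a classical code cut out by local constraints has minimum distance `≥ d`, and
`B j` are pairwise disjoint regions, each of size `< d`, such that every constraint
support intersects at most one of them, then two codewords agreeing on the complement
of `⋃ j, B j` are equal. -/
theorem agree_outside_blocks_eq {Λ Alph : Type*} [Fintype Λ] [DecidableEq Λ]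
    [Fintype Alph] [DecidableEq Alph]
    (m : ℕ) (S : Fin m → Finset Λ)
    (Pc : ∀ a : Fin m, ({u : Λ // u ∈ S a} → Alph) → Prop)
    (Code : Set (Λ → Alph))
    (hCode : Code = {x | ∀ a : Fin m, Pc a (fun u => x u.val)})
    (d : ℕ)
    (hdist : ∀ x ∈ Code, ∀ y ∈ Code, x ≠ y → d ≤ hammingDist x y)
    (r : ℕ) (B : Fin r → Finset Λ)
    (hdisj : ∀ j j' : Fin r, j ≠ j' → Disjoint (B j) (B j'))
    (hsep : ∀ (a : Fin m) (j j' : Fin r),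
      (S a ∩ B j).Nonempty → (S a ∩ B j').Nonempty → j = j')
    (hsmall : ∀ j : Fin r, (B j).card < d)
    (x y : Λ → Alph) (hx : x ∈ Code) (hy : y ∈ Code)
    (hagree : ∀ u : Λ, (∀ j : Fin r, u ∉ B j) → x u = y u) :
    x = y := by
  have key : ∀ j : Fin r, ∀ u ∈ B j, x u = y u := by
    intro j
    let z : Λ → Alph := fun u => if u ∈ B j then y u else x u
    have hz : z ∈ Code := by
      rw [hCode] at hx hy ⊢
      intro a
      by_cases hm : (S a ∩ B j).Nonempty
      · have e : (fun u : {u : Λ // u ∈ S a} => z u.val) = fun u => y u.val := by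
          funext u
          by_cases hu : u.val ∈ B j
          · simp [z, hu]
          · simp only [z, hu, if_false]
            refine hagree _ fun j' hj' => hu ?_
            rwa [hsep a j j' hm ⟨u.val, Finset.mem_inter.2 ⟨u.2, hj'⟩⟩]
        rw [e]
        exact hy a
      · have e : (fun u : {u : Λ // u ∈ S a} => z u.val) = fun u => x u.val := by
          funext u
          have hu : u.val ∉ B j := fun hu => hm ⟨u.val, Finset.mem_inter.2 ⟨u.2, hu⟩⟩
          simp [z, hu]
        rw [e]
        exact hx a
    have hzx : z = x := by
      by_contra hne
      have hle : hammingDist z x ≤ (B j).card := by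
        refine Finset.card_le_card fun u hu => ?_
        by_contra hn
        simp [z, hn] at hu
      exact absurd (hdist z hz x hx hne) (not_le.2 (hle.trans_lt (hsmall j)))
    intro u hu
    have h := congrFun hzx u
    simp only [z, hu, if_true] at h
    exact h.symm
  funext u
  by_cases h : ∃ j, u ∈ B j
  · obtain ⟨j, hj⟩ := h
    exact key j u hj
  · exact hagree u fun j hj => h ⟨j, hj⟩
end

section
/- Let C ⊆ (Λ → Σ) be a classical code cut out by constraints with supports S_1,…,S_m, with minimum distance ≥ d, and let B_1,…,B_r be pairwise disjoint subsets of Λ such that every support S_a intersects at most one of the sets B_j and |B_j| < d for every j. Then the restriction map from C to functions A → Σ, where A = Λ ∖ (B_1 ∪ … ∪ B_r), is injective; in particular |C| ≤ |Σ|^{|A|}. -/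
/-!
Cut and paste argument. Let `x, y` be codewords that agree on `A` but differ at a site of `B j`.
Let `z` be the word equal to `y` on `B j` and to `x` elsewhere. A support disjoint from `B j` only
sees `x`. A support meeting `B j` meets no other region, hence lies in `A ∪ B j`, where `z`
coincides with `y`. So `z` is a codeword; it differs from `x`, but only inside `B j`, which has
fewer than `d` sites, contradicting the minimum distance. The cardinality bound counts the
functions `A → Alph`.
-/

/-- If a classical code cut out by local constraints has minimum distance `≥ d`, and
`B j` are pairwise disjoint regions, each of size `< d`, such that every constraint
support intersects at most one of them, then the restriction map to
`A = Λ ∖ (⋃ j, B j)` is injective on the code; in particular `|Code| ≤ |Alph|^|A|`. -/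
theorem restriction_injective {Λ Alph : Type*} [Fintype Λ] [DecidableEq Λ]
    [Fintype Alph] [DecidableEq Alph]
    (m : ℕ) (S : Fin m → Finset Λ)
    (Pc : ∀ a : Fin m, ({u : Λ // u ∈ S a} → Alph) → Prop)
    (Code : Set (Λ → Alph))
    (hCode : Code = {x | ∀ a : Fin m, Pc a (fun u => x u.val)})
    (d : ℕ)
    (hdist : ∀ x ∈ Code, ∀ y ∈ Code, x ≠ y → d ≤ hammingDist x y)
    (r : ℕ) (B : Fin r → Finset Λ)
    (hdisj : ∀ j j' : Fin r, j ≠ j' → Disjoint (B j) (B j'))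
    (hsep : ∀ (a : Fin m) (j j' : Fin r),
      (S a ∩ B j).Nonempty → (S a ∩ B j').Nonempty → j = j')
    (hsmall : ∀ j : Fin r, (B j).card < d)
    (A : Finset Λ) (hA : A = Finset.univ \ Finset.univ.biUnion B) :
    Set.InjOn (fun (x : Λ → Alph) (u : {u : Λ // u ∈ A}) => x u.val) Code ∧
      Nat.card Code ≤ Fintype.card Alph ^ A.card := by
  have hinj : Set.InjOn (fun (x : Λ → Alph) (u : {u : Λ // u ∈ A}) => x u.val) Code := by
    intro x hx y hy hxy
    have hagree : ∀ u, (∀ j, u ∉ B j) → x u = y u := by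
      intro u hu
      have huA : u ∈ A := by simp [hA, hu]
      exact congrFun hxy ⟨u, huA⟩
    funext u
    by_contra hne
    obtain ⟨j, hj⟩ : ∃ j, u ∈ B j := by
      by_contra! h
      exact hne (hagree u h)
    set z : Λ → Alph := fun v => if v ∈ B j then y v else x v with hz
    have hzC : z ∈ Code := by
      rw [hCode] at hx hy ⊢
      intro a
      by_cases hne' : (S a ∩ B j).Nonempty
      · have hzy : (fun v : {v : Λ // v ∈ S a} => z v.val) = fun v => y v.val := by
          funext v
          by_cases hv : v.val ∈ B j
          · simp [hz, hv]
          · simp only [hz, hv, if_false]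
            refine hagree _ fun j' hj' => ?_
            have hjj' := hsep a j j' hne' ⟨v.val, Finset.mem_inter.2 ⟨v.2, hj'⟩⟩
            exact hv (hjj' ▸ hj')
        rw [hzy]
        exact hy a
      · have hzx : (fun v : {v : Λ // v ∈ S a} => z v.val) = fun v => x v.val := by
          funext v
          have hv : v.val ∉ B j := fun hv => hne' ⟨v.val, Finset.mem_inter.2 ⟨v.2, hv⟩⟩
          simp [hz, hv]
        rw [hzx]
        exact hx a
    have hxz : x ≠ z := fun h => hne (by simpa [hz, hj] using congrFun h u)
    have hle : hammingDist x z ≤ (B j).card := by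
      refine Finset.card_le_card fun v hv => ?_
      by_contra hvB
      simp [hz, hvB] at hv
    exact absurd (hdist x hx z hzC hxz) (by have := hsmall j; omega)
  refine ⟨hinj, ?_⟩
  calc Nat.card Code ≤ Nat.card ({u : Λ // u ∈ A} → Alph) :=
        Nat.card_le_card_of_injective _ hinj.injective
    _ = Fintype.card Alph ^ A.card := by simp [Nat.card_eq_fintype_card]
end

section
/- For every integer w ≥ 1 and q ≥ 2 there exists a constant c > 0 (depending only on w and q) such that: for every L ≥ 1, every finite alphabet Σ with |Σ| = q, every d ≥ 1, and every classical code C on the lattice Λ = Fin L × Fin L over Σ that is cut out by constraints whose supports are each contained in some w×w square of the lattice and that has minimum distance ≥ d, one has log₂|C| ≤ c·n/√d, where n = L². -/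
/-!
Cover the lattice by a periodic grid of strips of thickness `w`, horizontal and vertical, with
period `p = R + w` where `R = ⌊√(d - 1)⌋`. Off the grid the lattice splits into cells with at most
`R² < d` sites, and no `w × w` square meets two cells.

A codeword is determined by its values on the grid: if two codewords agree there and differ in
some cell, copying the second into the first on that cell alone violates no constraint
(`eq_of_agree_on_grid`), and the result is a codeword at distance at least `1` and less than `d`
from the first. Hence `|Code| ≤ q ^ |grid|`. Each direction has at most `w (L / p + 1)` strip
coordinates, so the grid has at most `2 w L (L / p + 1)` sites. Since `p ≥ √d`, this is at most
`4 w L² / √d` when `d ≤ L²`. When `d > L²`, there is at most one codeword.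
-/

/-- The sites of the `L × L` lattice on the grid of period `p` and strip thickness `w`. -/
def gridSites (L p w : ℕ) : Finset (Fin L × Fin L) :=
  Finset.univ.filter fun u => u.1.val % p < w ∨ u.2.val % p < w

/-- A window of length `w` that contains two off-strip coordinates keeps both in the same period:
any two consecutive cells are separated by a strip of thickness `w`. -/
lemma div_eq_of_window {p w i a b : ℕ} (hp : 0 < p)
    (ha : ¬ a % p < w) (hb : ¬ b % p < w)
    (ha1 : i ≤ a) (ha2 : a < i + w) (hb1 : i ≤ b) (hb2 : b < i + w) : a / p = b / p := by
  have ea := Nat.div_add_mod a p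
  have eb := Nat.div_add_mod b p
  have la := Nat.mod_lt a hp
  have lb := Nat.mod_lt b hp
  rcases lt_trichotomy (a / p) (b / p) with h | h | h
  · have := Nat.mul_le_mul_left p (Nat.succ_le_of_lt h)
    rw [Nat.mul_succ] at this
    omega
  · exact h
  · have := Nat.mul_le_mul_left p (Nat.succ_le_of_lt h)
    rw [Nat.mul_succ] at this
    omega

lemma card_strip_le (L p w : ℕ) :
    (Finset.univ.filter fun i : Fin L => i.val % p < w).card ≤ (L / p + 1) * w := by
  calc _ ≤ (Finset.range (L / p + 1) ×ˢ Finset.range w).card := by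
        apply Finset.card_le_card_of_injOn (fun i : Fin L => (i.val / p, i.val % p))
        · intro i hi
          have h := (Finset.mem_filter.1 (Finset.mem_coe.1 hi)).2
          have h2 : i.val / p ≤ L / p := Nat.div_le_div_right i.isLt.le
          simp only [Finset.coe_product, Finset.coe_range, Set.mem_prod, Set.mem_Iio]
          exact ⟨by omega, h⟩
        · intro i _ j _ hij
          simp only [Prod.mk.injEq] at hij
          apply Fin.ext
          rw [← Nat.div_add_mod i.val p, ← Nat.div_add_mod j.val p, hij.1, hij.2]
    _ = _ := by simp

lemma card_gridSites_le (L p w : ℕ) :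
    (gridSites L p w).card ≤ 2 * (L * ((L / p + 1) * w)) := by
  have h := card_strip_le L p w
  set F := Finset.univ.filter fun i : Fin L => i.val % p < w with hF
  have hsub : gridSites L p w ⊆ F ×ˢ Finset.univ ∪ Finset.univ ×ˢ F := by
    intro u hu
    simpa [gridSites, hF] using hu
  have h1 := (Finset.card_le_card hsub).trans (Finset.card_union_le _ _)
  simp only [Finset.card_product, Finset.card_univ, Fintype.card_fin] at h1
  nlinarith [Nat.mul_le_mul_left L h]

/-- A cell, that is, a component of the complement of the grid, has at most `R²` sites. -/
lemma card_cell_le (L R w a b : ℕ) (hw : 1 ≤ w) :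
    (Finset.univ.filter fun u : Fin L × Fin L =>
      u ∉ gridSites L (R + w) w ∧ u.1.val / (R + w) = a ∧ u.2.val / (R + w) = b).card
      ≤ R * R := by
  calc _ ≤ (Finset.range R ×ˢ Finset.range R).card := by
        apply Finset.card_le_card_of_injOn
          (fun u : Fin L × Fin L => (u.1.val % (R + w) - w, u.2.val % (R + w) - w))
        · intro u hu
          have l1 := Nat.mod_lt u.1.val (show R + w > 0 by omega)
          have l2 := Nat.mod_lt u.2.val (show R + w > 0 by omega)
          simp [gridSites] at hu ⊢
          omega
        · intro u hu v hv huv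
          simp [gridSites] at hu hv huv
          obtain ⟨⟨u1, u2⟩, u3, u4⟩ := hu
          obtain ⟨⟨v1, v2⟩, v3, v4⟩ := hv
          ext
          · rw [← Nat.div_add_mod u.1.val (R + w), ← Nat.div_add_mod v.1.val (R + w), u3, v3]
            omega
          · rw [← Nat.div_add_mod u.2.val (R + w), ← Nat.div_add_mod v.2.val (R + w), u4, v4]
            omega
    _ = _ := by simp

/-- The codewords of a code of minimum distance greater than `R²` are determined by their values on the grid whose
cells have side `R`. -/
lemma eq_of_agree_on_grid {L w R d m : ℕ} (hw : 1 ≤ w) (hR : R * R < d)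
    {Alph : Type} [DecidableEq Alph] {Code : Set (Fin L × Fin L → Alph)}
    (S : Fin m → Finset (Fin L × Fin L))
    (Pc : ∀ a : Fin m, ({u : Fin L × Fin L // u ∈ S a} → Alph) → Prop)
    (hS : ∀ a : Fin m, ∃ i j : ℕ, ∀ u ∈ S a,
      i ≤ u.1.val ∧ u.1.val < i + w ∧ j ≤ u.2.val ∧ u.2.val < j + w)
    (hC : Code = {x | ∀ a : Fin m, Pc a (fun u => x u.val)})
    (hd : ∀ x ∈ Code, ∀ y ∈ Code, x ≠ y → d ≤ hammingDist x y)
    {x y : Fin L × Fin L → Alph} (hx : x ∈ Code) (hy : y ∈ Code)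
    (hxy : ∀ u ∈ gridSites L (R + w) w, x u = y u) : x = y := by
  classical
  by_contra hne
  obtain ⟨v, hv⟩ := Function.ne_iff.1 hne
  set p := R + w with hp
  have hv_off : v ∉ gridSites L p w := fun h => hv (hxy v h)
  set A := Finset.univ.filter fun u : Fin L × Fin L =>
    u ∉ gridSites L p w ∧ u.1.val / p = v.1.val / p ∧ u.2.val / p = v.2.val / p with hA
  have hvA : v ∈ A := by simp [hA, hv_off]
  -- `z` replaces `x` by `y` on the cell of `v` and nowhere else.
  let z : Fin L × Fin L → Alph := fun u => if u ∈ A then y u else x u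
  have hz : z ∈ Code := by
    subst hC
    intro a
    obtain ⟨i, j, hij⟩ := hS a
    by_cases hex : ∃ u ∈ S a, u ∈ A
    · obtain ⟨u, huS, huA⟩ := hex
      have hzy : (fun t : {u // u ∈ S a} => z t.val) = fun t => y t.val := by
        funext t
        by_cases htA : t.val ∈ A
        · simp [z, htA]
        · simp only [z, if_neg htA]
          apply hxy
          by_contra htG
          apply htA
          have h1 := hij u huS
          have h2 := hij t.val t.property
          have huA' := (Finset.mem_filter.1 huA).2
          have huG := huA'.1
          have htG' := htG
          simp only [gridSites, Finset.mem_filter, Finset.mem_univ, true_and, not_or]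
            at huG htG'
          refine Finset.mem_filter.2 ⟨Finset.mem_univ _, htG, ?_, ?_⟩
          · rw [← huA'.2.1]
            exact div_eq_of_window (by omega) htG'.1 huG.1 h2.1 h2.2.1 h1.1 h1.2.1
          · rw [← huA'.2.2]
            exact div_eq_of_window (by omega) htG'.2 huG.2 h2.2.2.1 h2.2.2.2 h1.2.2.1 h1.2.2.2
      rw [hzy]
      exact hy a
    · have hzx : (fun t : {u // u ∈ S a} => z t.val) = fun t => x t.val := by
        funext t
        have : t.val ∉ A := fun h => hex ⟨t.val, t.property, h⟩
        simp [z, this]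
      rw [hzx]
      exact hx a
  have hxz : x ≠ z := fun h => hv (by simpa [z, hvA] using congrFun h v)
  have hle : hammingDist x z ≤ A.card := by
    apply Finset.card_le_card
    intro u hu
    by_contra huA
    simp [z, huA] at hu
  have h1 := hd x hx z hz hxz
  have h2 : A.card ≤ R * R := card_cell_le L R w _ _ hw
  omega


/-- **Tradeoff for 2D classical codes.** For every interaction range `w ≥ 1` and
alphabet size `q ≥ 2` there is a constant `c > 0` such that every classical code on
the `L × L` lattice over an alphabet of size `q`, cut out by constraints supported
on `w × w` squares and with minimum distance `≥ d`, satisfies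
`log₂ |Code| ≤ c n / √d` with `n = L²`. -/
theorem classical_tradeoff_2d :
    ∀ w q : ℕ, 1 ≤ w → 2 ≤ q → ∃ c : ℝ, 0 < c ∧
      ∀ L : ℕ, 1 ≤ L → ∀ (Alph : Type) [Fintype Alph] [DecidableEq Alph],
        Fintype.card Alph = q →
        ∀ d : ℕ, 1 ≤ d → ∀ Code : Set (Fin L × Fin L → Alph),
          (∃ (m : ℕ) (S : Fin m → Finset (Fin L × Fin L))
             (Pc : ∀ a : Fin m, ({u : Fin L × Fin L // u ∈ S a} → Alph) → Prop),
             (∀ a : Fin m, ∃ i j : ℕ, ∀ u ∈ S a,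
               i ≤ u.1.val ∧ u.1.val < i + w ∧ j ≤ u.2.val ∧ u.2.val < j + w) ∧
             Code = {x | ∀ a : Fin m, Pc a (fun u => x u.val)}) →
          (∀ x ∈ Code, ∀ y ∈ Code, x ≠ y → d ≤ hammingDist x y) →
          Real.logb 2 (Nat.card Code) ≤ c * ((L : ℝ) ^ 2) / Real.sqrt d := by
  intro w q hw hq
  have hq1 : (1 : ℝ) < q := by exact_mod_cast hq
  have hlog : 0 < Real.logb 2 q := Real.logb_pos (by norm_num) hq1
  have hw' : (0 : ℝ) < w := by exact_mod_cast hw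
  refine ⟨4 * w * Real.logb 2 q, by positivity, ?_⟩
  intro L hL Alph _ _ hcard d hd Code ⟨m, S, Pc, hS, hC⟩ hdist
  have hL' : (0 : ℝ) < L := by exact_mod_cast hL
  have hd' : (0 : ℝ) < d := by exact_mod_cast hd
  have hsd : 0 < Real.sqrt d := Real.sqrt_pos.2 hd'
  have hrhs : 0 ≤ 4 * w * Real.logb 2 q * (L : ℝ) ^ 2 / Real.sqrt d := by positivity
  rcases le_or_gt (Nat.card Code) 1 with h1 | h1
  · refine le_trans ?_ hrhs
    apply Real.logb_nonpos (by norm_num) (by positivity)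
    exact_mod_cast h1
  -- Two distinct codewords exist, so `d` is at most the number of sites.
  have hdL : d ≤ L * L := by
    have : Nontrivial Code := Finite.one_lt_card_iff_nontrivial.1 h1
    obtain ⟨x, y, hxy⟩ := exists_pair_ne Code
    have h2 := hdist x x.2 y y.2 (fun h => hxy (Subtype.ext h))
    have h3 := hammingDist_le_card_fintype (x := x.1) (y := y.1)
    simp only [Fintype.card_prod, Fintype.card_fin] at h3
    exact h2.trans h3
  set R := Nat.sqrt (d - 1) with hRdef
  have hR : R * R < d := by
    have : R * R ≤ d - 1 := Nat.sqrt_le (d - 1)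
    omega
  have hR2 : d ≤ (R + 1) * (R + 1) := by
    have : d - 1 < (R + 1) * (R + 1) := Nat.lt_succ_sqrt (d - 1)
    omega
  set G := gridSites L (R + w) w with hG
  have hcardC : Nat.card Code ≤ q ^ G.card := by
    have hinj : Function.Injective
        (fun (x : Code) (u : {u // u ∈ G}) => x.1 u.1) := by
      intro x y hxy
      apply Subtype.ext
      exact eq_of_agree_on_grid hw hR S Pc hS hC hdist x.2 y.2
        (fun u hu => congrFun hxy ⟨u, hu⟩)
    have := Nat.card_le_card_of_injective _ hinj
    simpa [Nat.card_eq_fintype_card, hcard] using this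
  have hlogle : Real.logb 2 (Nat.card Code) ≤ G.card * Real.logb 2 q := by
    rw [← Real.logb_pow]
    apply Real.logb_le_logb_of_le (by norm_num)
    · exact_mod_cast (by omega : 0 < Nat.card Code)
    · exact_mod_cast hcardC
  have hsp : Real.sqrt d ≤ ((R + w : ℕ) : ℝ) := by
    have h1 : Real.sqrt d ≤ (R : ℝ) + 1 := by
      apply Real.sqrt_le_iff.2
      refine ⟨by positivity, ?_⟩
      have : (d : ℝ) ≤ ((R : ℝ) + 1) * ((R : ℝ) + 1) := by exact_mod_cast hR2
      nlinarith
    have h2 : (1 : ℝ) ≤ w := by exact_mod_cast hw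
    push_cast
    linarith
  have hsL : Real.sqrt d ≤ L := by
    apply Real.sqrt_le_iff.2
    refine ⟨hL'.le, ?_⟩
    have : (d : ℝ) ≤ (L : ℝ) * L := by exact_mod_cast hdL
    nlinarith
  have hquot : ((L / (R + w) : ℕ) : ℝ) + 1 ≤ 2 * (L / Real.sqrt d) := by
    have h1 : ((L / (R + w) : ℕ) : ℝ) ≤ L / ((R + w : ℕ) : ℝ) := Nat.cast_div_le
    have h2 : (L : ℝ) / ((R + w : ℕ) : ℝ) ≤ L / Real.sqrt d := by gcongr
    have h3 : 1 ≤ (L : ℝ) / Real.sqrt d := (one_le_div hsd).2 hsL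
    linarith
  have hGc : (G.card : ℝ) ≤ 2 * (L * ((((L / (R + w) : ℕ) : ℝ) + 1) * w)) := by
    exact_mod_cast card_gridSites_le L (R + w) w
  calc Real.logb 2 (Nat.card Code) ≤ G.card * Real.logb 2 q := hlogle
    _ ≤ (2 * (L * ((((L / (R + w) : ℕ) : ℝ) + 1) * w))) * Real.logb 2 q := by gcongr
    _ ≤ (2 * (L * ((2 * (L / Real.sqrt d)) * w))) * Real.logb 2 q := by gcongr
    _ = 4 * w * Real.logb 2 q * (L : ℝ) ^ 2 / Real.sqrt d := by ring
end

section
/- For every integer p ≥ 0, d(p) = 3^p; that is, the minimum Hamming weight of a nonzero codeword of the cellular-automaton code C_∞^{2^p} is exactly 3^p. -/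
/-!
Shearing a codeword along the two parity classes of `i + t` turns the rule into
`y(j, t+1) = y(j, t) + y(j-1, t)`, i.e. row `t` is row `0` multiplied by `(1 + z) ^ t` over `𝔽₂`.
The weight of `x` is the sum of the weights of its two sheared halves (`encard_supp_eq_halves`),
so both bounds reduce to sheared words.

By the Frobenius identity `(1 + z)^2 = 1 + z^2`, the four subwords
`(j, s) ↦ y(2j+a, 2s+b)`, `a, b ∈ {0,1}`, of a sheared word of length `2L` are sheared words of
length `L` (`IsSheared.sub`), and their weights add up to that of `y`
(`encard_supp_eq_quarters`). If row `0` of `y` is `g(z^2) + z h(z^2)`, the four initial rows are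
`g`, `h`, `g + z h`, `g + h`. If row `0` is nonzero and finitely supported, at most one of these
vanishes: the only nontrivial case, `g + z h = g + h = 0`, makes `h` translation invariant,
hence zero.
Hence the minimum weight at least triples when `p` increases by one. If row `0` is a single `1`
at the origin, exactly three of the four subwords have that same initial row and the fourth is
zero, so the weight of this word triples exactly and the bound `3 ^ p` is attained.
-/

/-- The cellular-automaton code `C_∞^L`: finitely supported `𝔽₂`-valued configurations
on the semi-infinite strip `ℤ × {0,…,L-1}` (encoded as functions `ℤ → ℕ → 𝔽₂`
vanishing on rows `t ≥ L`) satisfying the rule `x(i,t+1) = x(i-1,t) + x(i+1,t)`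
for all `i ∈ ℤ` and `0 ≤ t ≤ L-2`. -/
def CAcode (L : ℕ) : Set (ℤ → ℕ → ZMod 2) :=
  {x | {p : ℤ × ℕ | x p.1 p.2 ≠ 0}.Finite ∧
       (∀ (i : ℤ) (t : ℕ), t + 2 ≤ L → x i (t + 1) = x (i - 1) t + x (i + 1) t) ∧
       (∀ (i : ℤ) (t : ℕ), L ≤ t → x i t = 0)}

/-- `d(p)`: the minimum Hamming weight of a nonzero codeword of `C_∞^{2^p}`. -/
noncomputable def caDist (p : ℕ) : ℕ :=
  sInf {w : ℕ | ∃ x ∈ CAcode (2 ^ p), x ≠ 0 ∧ {r : ℤ × ℕ | x r.1 r.2 ≠ 0}.ncard = w}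

/-! ### Sheared words and their subwords -/

/-- The support of a space-time configuration; its `encard` is the Hamming weight. -/
def supp (x : ℤ → ℕ → ZMod 2) : Set (ℤ × ℕ) := {r | x r.1 r.2 ≠ 0}

/-- Configurations of length `L` obeying the sheared rule `y(i, t+1) = y(i, t) + y(i-1, t)`.
No finiteness of the support is required. -/
def IsSheared (L : ℕ) (y : ℤ → ℕ → ZMod 2) : Prop :=
  (∀ (i : ℤ) (t : ℕ), t + 2 ≤ L → y i (t + 1) = y i t + y (i - 1) t) ∧
    ∀ (i : ℤ) (t : ℕ), L ≤ t → y i t = 0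

/-- The subword of `y` on columns congruent to `a` and rows congruent to `b` modulo `2`
(for `a, b ∈ {0, 1}`). -/
def sub (a : ℤ) (b : ℕ) (y : ℤ → ℕ → ZMod 2) : ℤ → ℕ → ZMod 2 :=
  fun j s => y (2 * j + a) (2 * s + b)

/-- The part of `x` on the sublattice `i + t ≡ a` modulo `2`, in sheared coordinates. -/
def half (a : ℤ) (x : ℤ → ℕ → ZMod 2) : ℤ → ℕ → ZMod 2 :=
  fun j t => x (2 * j - t + a) t

/-- Counting a set along two injections whose ranges partition the ambient type. -/
lemma encard_eq_preimage_add {α : Type*} (f g : α → α) (hf : f.Injective) (hg : g.Injective)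
    (hfg : ∀ a b, f a ≠ g b) (hc : ∀ c, (∃ a, f a = c) ∨ ∃ b, g b = c) (S : Set α) :
    S.encard = (f ⁻¹' S).encard + (g ⁻¹' S).encard := by
  rw [← hf.encard_image (f ⁻¹' S), ← hg.encard_image (g ⁻¹' S), ← Set.encard_union_eq]
  · congr 1
    ext c
    simp only [Set.mem_union, Set.mem_image, Set.mem_preimage]
    constructor
    · intro h
      rcases hc c with ⟨a, rfl⟩ | ⟨a, rfl⟩
      · exact Or.inl ⟨a, h, rfl⟩
      · exact Or.inr ⟨a, h, rfl⟩
    · rintro (⟨a, h, rfl⟩ | ⟨a, h, rfl⟩) <;> exact h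
  · rw [Set.disjoint_left]
    rintro _ ⟨a, -, rfl⟩ ⟨b, -, h⟩
    exact hfg a b h.symm

lemma encard_supp_eq_halves (x : ℤ → ℕ → ZMod 2) :
    (supp x).encard = (supp (half 0 x)).encard + (supp (half 1 x)).encard := by
  apply encard_eq_preimage_add (fun r : ℤ × ℕ => (2 * r.1 - r.2 + 0, r.2))
    (fun r : ℤ × ℕ => (2 * r.1 - r.2 + 1, r.2))
  · rintro ⟨a, b⟩ ⟨c, d⟩ h
    simp only [Prod.mk.injEq] at h ⊢
    omega
  · rintro ⟨a, b⟩ ⟨c, d⟩ h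
    simp only [Prod.mk.injEq] at h ⊢
    omega
  · rintro ⟨a, b⟩ ⟨c, d⟩ h
    simp only [Prod.mk.injEq] at h
    omega
  · rintro ⟨c, d⟩
    rcases Int.emod_two_eq_zero_or_one (c + d) with h | h
    · refine Or.inl ⟨((c + d) / 2, d), ?_⟩
      simp only [Prod.mk.injEq, and_true]
      omega
    · refine Or.inr ⟨((c + d) / 2, d), ?_⟩
      simp only [Prod.mk.injEq, and_true]
      omega

lemma encard_supp_eq_quarters (y : ℤ → ℕ → ZMod 2) :
    (supp y).encard = (supp (sub 0 0 y)).encard + (supp (sub 1 0 y)).encard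
      + ((supp (sub 0 1 y)).encard + (supp (sub 1 1 y)).encard) := by
  have hrow := encard_eq_preimage_add (fun r : ℤ × ℕ => (r.1, 2 * r.2 + 0))
    (fun r : ℤ × ℕ => (r.1, 2 * r.2 + 1))
    (by rintro ⟨a, b⟩ ⟨c, d⟩ h; simp only [Prod.mk.injEq] at h ⊢; omega)
    (by rintro ⟨a, b⟩ ⟨c, d⟩ h; simp only [Prod.mk.injEq] at h ⊢; omega)
    (by rintro ⟨a, b⟩ ⟨c, d⟩ h; simp only [Prod.mk.injEq] at h; omega)
    (by
      rintro ⟨c, d⟩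
      rcases Nat.mod_two_eq_zero_or_one d with h | h
      · refine Or.inl ⟨(c, d / 2), ?_⟩
        simp only [Prod.mk.injEq, true_and]
        omega
      · refine Or.inr ⟨(c, d / 2), ?_⟩
        simp only [Prod.mk.injEq, true_and]
        omega)
  have hcol := encard_eq_preimage_add (fun r : ℤ × ℕ => (2 * r.1 + 0, r.2))
    (fun r : ℤ × ℕ => (2 * r.1 + 1, r.2))
    (by rintro ⟨a, b⟩ ⟨c, d⟩ h; simp only [Prod.mk.injEq] at h ⊢; omega)
    (by rintro ⟨a, b⟩ ⟨c, d⟩ h; simp only [Prod.mk.injEq] at h ⊢; omega)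
    (by rintro ⟨a, b⟩ ⟨c, d⟩ h; simp only [Prod.mk.injEq] at h; omega)
    (by
      rintro ⟨c, d⟩
      rcases Int.emod_two_eq_zero_or_one c with h | h
      · refine Or.inl ⟨(c / 2, d), ?_⟩
        simp only [Prod.mk.injEq, and_true]
        omega
      · refine Or.inr ⟨(c / 2, d), ?_⟩
        simp only [Prod.mk.injEq, and_true]
        omega)
  rw [hrow, hcol, hcol ((fun r : ℤ × ℕ => (r.1, 2 * r.2 + 1)) ⁻¹' supp y)]
  rfl

/-- Two steps of the sheared rule act as one step on every other column, because
`(1 + z)^2 = 1 + z^2` in characteristic `2`. -/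
lemma IsSheared.sub {L : ℕ} {y : ℤ → ℕ → ZMod 2} (hy : IsSheared (2 * L) y) (a : ℤ) (b : ℕ)
    (hb : b ≤ 1) : IsSheared L (sub a b y) := by
  refine ⟨fun j s hs => ?_, fun j s hs => hy.2 _ _ (by omega)⟩
  have h1 := hy.1 (2 * j + a) (2 * s + b + 1) (by omega)
  have h2 := hy.1 (2 * j + a) (2 * s + b) (by omega)
  have h3 := hy.1 (2 * j + a - 1) (2 * s + b) (by omega)
  have e1 : 2 * (s + 1) + b = 2 * s + b + 1 + 1 := by ring
  have e2 : 2 * (j - 1) + a = 2 * j + a - 1 - 1 := by ring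
  simp only [_root_.sub, e1, e2]
  rw [h1, h2, h3]
  linear_combination CharTwo.add_self_eq_zero (y (2 * j + a - 1) (2 * s + b))

lemma IsSheared.half {L : ℕ} {x : ℤ → ℕ → ZMod 2}
    (h1 : ∀ (i : ℤ) (t : ℕ), t + 2 ≤ L → x i (t + 1) = x (i - 1) t + x (i + 1) t)
    (h2 : ∀ (i : ℤ) (t : ℕ), L ≤ t → x i t = 0) (a : ℤ) : IsSheared L (half a x) := by
  refine ⟨fun j t ht => ?_, fun j t ht => h2 _ _ ht⟩
  have e1 : 2 * j - ((t + 1 : ℕ) : ℤ) + a - 1 = 2 * (j - 1) - t + a := by push_cast; ring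
  have e2 : 2 * j - ((t + 1 : ℕ) : ℤ) + a + 1 = 2 * j - t + a := by push_cast; ring
  simp only [_root_.half]
  rw [h1 _ _ ht, e1, e2, add_comm]

lemma IsSheared.eq_zero {L : ℕ} {y : ℤ → ℕ → ZMod 2} (hy : IsSheared L y)
    (h0 : ∀ i, y i 0 = 0) : ∀ t i, y i t = 0 := by
  intro t
  induction t with
  | zero => exact h0
  | succ t ih =>
    intro i
    by_cases ht : t + 2 ≤ L
    · rw [hy.1 i t ht, ih, ih, add_zero]
    · exact hy.2 _ _ (by omega)

lemma IsSheared.encard_eq_zero {L : ℕ} {y : ℤ → ℕ → ZMod 2} (hy : IsSheared L y)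
    (h0 : ∀ i, y i 0 = 0) : (supp y).encard = 0 := by
  rw [Set.encard_eq_zero, Set.eq_empty_iff_forall_notMem]
  intro r hr
  exact hr (hy.eq_zero h0 _ _)

/-! ### The lower bound for sheared words -/

/-- If among any two of `a, b, c, d` one is at least `k`, then at most one of the four is below
`k`, so the sum is at least `3k`. -/
lemma three_mul_le {k a b c d : ℕ∞} (hab : k ≤ a ∨ k ≤ b) (hac : k ≤ a ∨ k ≤ c)
    (had : k ≤ a ∨ k ≤ d) (hbc : k ≤ b ∨ k ≤ c) (hbd : k ≤ b ∨ k ≤ d) (hcd : k ≤ c ∨ k ≤ d) :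
    k * 3 ≤ a + b + (c + d) := by
  by_cases ha : a = ⊤
  · simp [ha]
  by_cases hb : b = ⊤
  · simp [hb]
  by_cases hc : c = ⊤
  · simp [hc]
  by_cases hd : d = ⊤
  · simp [hd]
  have hk : k ≠ ⊤ := by
    rintro rfl
    rcases hab with h | h <;> simp_all
  lift a to ℕ using ha
  lift b to ℕ using hb
  lift c to ℕ using hc
  lift d to ℕ using hd
  lift k to ℕ using hk
  norm_cast at *
  omega

/-- A translation-invariant, finitely supported function on `ℤ` is zero. -/
lemma eq_zero_of_shift_eq {h : ℤ → ZMod 2} (hfin : {i | h i ≠ 0}.Finite)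
    (hs : ∀ j, h j = h (j - 1)) : ∀ j, h j = 0 := by
  have hconst : ∀ j, h j = h 0 := by
    intro j
    induction j with
    | zero => rfl
    | succ n ih => rw [hs]; simpa using ih
    | pred n ih => rw [← hs]; exact ih
  by_contra! hne
  obtain ⟨j, hj⟩ := hne
  apply Set.infinite_univ (α := ℤ)
  convert hfin
  symm
  rw [Set.eq_univ_iff_forall]
  intro i
  simpa only [Set.mem_ofPred_eq, hconst i, ← hconst j] using hj

/-- The lower bound for sheared words: at least three of the four subwords have a nonzero initial
row. Finiteness of the support excludes a constant nonzero subword when both odd subwords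
vanish. -/
lemma IsSheared.le_encard (p : ℕ) : ∀ y : ℤ → ℕ → ZMod 2, IsSheared (2 ^ p) y →
    (supp y).Finite → (∃ i, y i 0 ≠ 0) → (3 : ℕ∞) ^ p ≤ (supp y).encard := by
  induction p with
  | zero =>
    rintro y - - ⟨i, hi⟩
    rw [pow_zero, Set.one_le_encard_iff_nonempty]
    exact ⟨(i, 0), hi⟩
  | succ p ih =>
    rintro y hy hfin ⟨i, hi⟩
    rw [pow_succ, mul_comm] at hy
    have hfin_sub : ∀ a b, (supp (_root_.sub a b y)).Finite := by
      intro a b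
      refine hfin.preimage (f := fun r : ℤ × ℕ => (2 * r.1 + a, 2 * r.2 + b)) ?_
      rintro ⟨a, b⟩ - ⟨c, d⟩ - h
      simp only [Prod.mk.injEq] at h ⊢
      omega
    have key : ∀ a b, b ≤ 1 →
        (∀ j, y (2 * j + a) b = 0) ∨ (3 : ℕ∞) ^ p ≤ (supp (_root_.sub a b y)).encard := by
      intro a b hb
      by_cases h : ∃ j, y (2 * j + a) b ≠ 0
      · obtain ⟨j, hj⟩ := h
        exact Or.inr (ih _ (hy.sub a b hb) (hfin_sub a b) ⟨j, by simpa [_root_.sub] using hj⟩)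
      · push Not at h
        exact Or.inl h
    have hL : 0 + 2 ≤ 2 * 2 ^ p := by have := Nat.one_le_two_pow (n := p); omega
    have u : ∀ j, y (2 * j + 0) 1 = y (2 * j + 0) 0 + y (2 * (j - 1) + 1) 0 := by
      intro j
      have := hy.1 (2 * j + 0) 0 hL
      rwa [show 2 * j + 0 - 1 = 2 * (j - 1) + 1 by ring] at this
    have v : ∀ j, y (2 * j + 1) 1 = y (2 * j + 1) 0 + y (2 * j + 0) 0 := by
      intro j
      have := hy.1 (2 * j + 1) 0 hL
      rwa [show 2 * j + 1 - 1 = 2 * j + 0 by ring] at this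
    have gh : (∀ j, y (2 * j + 0) 0 = 0) → (∀ j, y (2 * j + 1) 0 = 0) → False := by
      intro hg hh
      rcases Int.emod_two_eq_zero_or_one i with h | h
      · exact hi (by rw [show i = 2 * (i / 2) + 0 by omega]; exact hg _)
      · exact hi (by rw [show i = 2 * (i / 2) + 1 by omega]; exact hh _)
    rw [encard_supp_eq_quarters, pow_succ]
    have k00 := key 0 0 (by norm_num)
    have k10 := key 1 0 (by norm_num)
    have k01 := key 0 1 le_rfl
    have k11 := key 1 1 le_rfl
    apply three_mul_le
    · rcases k00 with g | k
      · exact Or.inr (k10.resolve_left fun h => gh g h)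
      · exact Or.inl k
    · rcases k00 with g | k
      · refine Or.inr (k01.resolve_left fun h => gh g fun j => ?_)
        have := u (j + 1)
        rw [h, g, add_sub_cancel_right, zero_add] at this
        exact this.symm
      · exact Or.inl k
    · rcases k00 with g | k
      · refine Or.inr (k11.resolve_left fun h => gh g fun j => ?_)
        have := v j
        rw [h, g, add_zero] at this
        exact this.symm
      · exact Or.inl k
    · rcases k10 with g | k
      · refine Or.inr (k01.resolve_left fun h => gh (fun j => ?_) g)
        have := u j
        rw [h, g, add_zero] at this
        exact this.symm
      · exact Or.inl k
    · rcases k10 with g | k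
      · refine Or.inr (k11.resolve_left fun h => gh (fun j => ?_) g)
        have := v j
        rw [h, g, zero_add] at this
        exact this.symm
      · exact Or.inl k
    · rcases k01 with g | k
      · refine Or.inr (k11.resolve_left fun h => ?_)
        have e1 : ∀ j, y (2 * j + 1) 0 = y (2 * j + 0) 0 := fun j =>
          CharTwo.add_eq_zero.1 ((v j).symm.trans (h j))
        have e2 : ∀ j, y (2 * j + 0) 0 = y (2 * (j - 1) + 1) 0 := fun j =>
          CharTwo.add_eq_zero.1 ((u j).symm.trans (g j))
        have hz : ∀ j, y (2 * j + 1) 0 = 0 := by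
          refine eq_zero_of_shift_eq (h := fun j => y (2 * j + 1) 0) ?_
            fun j => (e1 j).trans (e2 j)
          refine hfin.preimage (f := fun j : ℤ => (2 * j + 1, 0)) ?_
          rintro a - b - h
          simp only [Prod.mk.injEq] at h
          omega
        exact gh (fun j => (e1 j).symm.trans (hz j)) hz
      · exact Or.inl k

/-! ### The extremal word -/

/-- The sheared word started from a single `1` at the origin (Pascal's triangle modulo `2`) has
weight exactly `3 ^ p`. -/
lemma IsSheared.encard_eq (p : ℕ) : ∀ y : ℤ → ℕ → ZMod 2, IsSheared (2 ^ p) y →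
    (∀ i, y i 0 = if i = 0 then 1 else 0) → (supp y).encard = (3 : ℕ∞) ^ p := by
  induction p with
  | zero =>
    intro y hy h0
    rw [pow_zero, Set.encard_eq_one]
    refine ⟨(0, 0), ?_⟩
    ext ⟨i, t⟩
    simp only [supp, Set.mem_ofPred_eq, Set.mem_singleton_iff, Prod.mk.injEq]
    rcases t with _ | t
    · simp [h0]
    · simp [hy.2 i (t + 1) (by simp)]
  | succ p ih =>
    intro y hy h0
    rw [pow_succ, mul_comm] at hy
    have hL : 0 + 2 ≤ 2 * 2 ^ p := by have := Nat.one_le_two_pow (n := p); omega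
    have hrow : ∀ i, y i 1 = y i 0 + y (i - 1) 0 := fun i => hy.1 i 0 hL
    rw [encard_supp_eq_quarters, ih _ (hy.sub 0 0 (by norm_num)) ?_,
      (hy.sub 1 0 (by norm_num)).encard_eq_zero ?_, ih _ (hy.sub 0 1 le_rfl) ?_,
      ih _ (hy.sub 1 1 le_rfl) ?_, pow_succ]
    · ring
    all_goals
      intro j
      simp only [_root_.sub, mul_zero, zero_add, hrow, h0]
      split_ifs <;> first | omega | simp

/-- The codeword of length `L` whose initial row is a single `1` at the origin. -/
def pascal (L : ℕ) (i : ℤ) (t : ℕ) : ZMod 2 :=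
  if t < L then
    Nat.rec (motive := fun _ => ℤ → ZMod 2) (fun j => if j = 0 then 1 else 0)
      (fun _ f j => f (j - 1) + f (j + 1)) t i
  else 0

lemma encard_pascal (p : ℕ) : (supp (pascal (2 ^ p))).encard = (3 : ℕ∞) ^ p := by
  have hsh : ∀ a, IsSheared (2 ^ p) (half a (pascal (2 ^ p))) := by
    refine IsSheared.half (fun i t ht => ?_) (fun i t ht => ?_)
    · simp [pascal, show t + 1 < 2 ^ p by omega, show t < 2 ^ p by omega]
    · simp [pascal, ht]
  rw [encard_supp_eq_halves, IsSheared.encard_eq p _ (hsh 0) ?_, (hsh 1).encard_eq_zero ?_,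
    add_zero]
  · intro j
    have : 2 * j + 1 ≠ 0 := by omega
    simp [half, pascal, this]
  · intro j
    simp [half, pascal]

lemma pascal_mem (p : ℕ) : pascal (2 ^ p) ∈ CAcode (2 ^ p) := by
  refine ⟨?_, fun i t ht => ?_, fun i t ht => ?_⟩
  · refine Set.finite_of_encard_le_coe (k := 3 ^ p) ?_
    exact_mod_cast (encard_pascal p).le
  · simp [pascal, show t + 1 < 2 ^ p by omega, show t < 2 ^ p by omega]
  · simp [pascal, ht]

/-! ### The minimum weight of the code -/

/-- The lower bound for codewords: a half of `x` with nonzero initial row already has weight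
at least `3 ^ p`. -/
lemma le_encard_of_mem (p : ℕ) {x : ℤ → ℕ → ZMod 2} (hx : x ∈ CAcode (2 ^ p)) (hne : x ≠ 0) :
    (3 : ℕ∞) ^ p ≤ (supp x).encard := by
  obtain ⟨hfin, h1, h2⟩ := hx
  have hsum := encard_supp_eq_halves x
  have hfin' : (supp x).encard ≠ ⊤ := Set.encard_ne_top_iff.2 hfin
  have key : ∀ a, (supp (half a x)).encard ≤ (supp x).encard →
      (∃ i, half a x i 0 ≠ 0) → (3 : ℕ∞) ^ p ≤ (supp x).encard := by
    intro a hle hi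
    refine le_trans (IsSheared.le_encard p _ (IsSheared.half h1 h2 a) ?_ hi) hle
    exact Set.encard_ne_top_iff.1 (ne_top_of_le_ne_top hfin' hle)
  have hz : (∃ i, half 0 x i 0 ≠ 0) ∨ ∃ i, half 1 x i 0 ≠ 0 := by
    by_contra! hcon
    have e0 := (IsSheared.half h1 h2 0).encard_eq_zero hcon.1
    have e1 := (IsSheared.half h1 h2 1).encard_eq_zero hcon.2
    rw [e0, e1, add_zero, Set.encard_eq_zero, Set.eq_empty_iff_forall_notMem] at hsum
    exact hne (funext fun i => funext fun t => not_not.1 (hsum (i, t)))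
  rcases hz with hz | hz
  · exact key 0 (hsum ▸ le_self_add) hz
  · exact key 1 (hsum ▸ le_add_self) hz

/-- **Lemma 3.** The minimum Hamming weight of a nonzero codeword of the
cellular-automaton code `C_∞^{2^p}` is exactly `3^p`. -/
theorem caDist_eq (p : ℕ) : caDist p = 3 ^ p := by
  have hmem : 3 ^ p ∈ {w : ℕ | ∃ x ∈ CAcode (2 ^ p), x ≠ 0 ∧
      {r : ℤ × ℕ | x r.1 r.2 ≠ 0}.ncard = w} := by
    refine ⟨pascal (2 ^ p), pascal_mem p, fun h => ?_, ?_⟩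
    · have := congrFun (congrFun h 0) 0
      simp [pascal] at this
    · change (supp (pascal (2 ^ p))).ncard = 3 ^ p
      rw [Set.ncard_def, encard_pascal]
      exact_mod_cast ENat.toNat_natCast (3 ^ p)
  refine le_antisymm (Nat.sInf_le hmem) (le_csInf ⟨_, hmem⟩ ?_)
  rintro w ⟨x, hx, hne, rfl⟩
  have h := le_encard_of_mem p hx hne
  change 3 ^ p ≤ (supp x).ncard
  have hfin : (supp x).Finite := hx.1
  rw [← hfin.cast_ncard_eq] at h
  exact_mod_cast h
end

section
/- For every integer p ≥ 1, d(p) ≥ 3·d(p−1), where d(p) is the minimum Hamming weight of a nonzero codeword of C_∞^{2^p}. -/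
/-- The support of a configuration, as a subset of `ℤ × ℕ`. -/
def caSupp (x : ℤ → ℕ → ZMod 2) : Set (ℤ × ℕ) := {r | x r.1 r.2 ≠ 0}

open Classical in
/-- The restriction of `x` to the points `(2i + r, 2s + e)` with `i + s` even, rescaled to the
coordinates `(i, s)` and extended by zero. -/
noncomputable def caSub (x : ℤ → ℕ → ZMod 2) (r : ℤ) (e : ℕ) : ℤ → ℕ → ZMod 2 :=
  fun i s => if Even (i + s) then x (2 * i + r) (2 * s + e) else 0

/-- The embedding of coordinates underlying `caSub`. -/
def caEmb (r : ℤ) (e : ℕ) : ℤ × ℕ → ℤ × ℕ := fun u => (2 * u.1 + r, 2 * u.2 + e)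

lemma caEmb_injective (r : ℤ) (e : ℕ) : Function.Injective (caEmb r e) := by
  rintro ⟨a, b⟩ ⟨c, d⟩ h
  simp only [caEmb, Prod.mk.injEq] at h ⊢
  omega

lemma mem_caSupp_caSub {x : ℤ → ℕ → ZMod 2} {r : ℤ} {e : ℕ} {u : ℤ × ℕ}
    (h : u ∈ caSupp (caSub x r e)) : Even (u.1 + u.2) ∧ caEmb r e u ∈ caSupp x := by
  simp only [caSupp, caSub, Set.mem_ofPred_eq, ne_eq, ite_eq_right_iff, Classical.not_imp] at h
  exact h

lemma image_caSub_subset (x : ℤ → ℕ → ZMod 2) (r : ℤ) (e : ℕ) :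
    caEmb r e '' caSupp (caSub x r e) ⊆ caSupp x := by
  rintro _ ⟨u, hu, rfl⟩
  exact (mem_caSupp_caSub hu).2

/-- The two-step rule. -/
lemma two_step {L : ℕ} {x : ℤ → ℕ → ZMod 2} (hx : x ∈ CAcode L) (i : ℤ) (t : ℕ)
    (ht : t + 3 ≤ L) : x i (t + 2) = x (i - 2) t + x (i + 2) t := by
  have h1 := hx.2.1 i (t + 1) (by omega)
  have h2 := hx.2.1 (i - 1) t (by omega)
  have h3 := hx.2.1 (i + 1) t (by omega)
  rw [show i - 1 - 1 = i - 2 by ring, show i - 1 + 1 = i by ring] at h2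
  rw [show i + 1 + 1 = i + 2 by ring, show i + 1 - 1 = i by ring] at h3
  rw [h1, h2, h3]
  linear_combination CharTwo.add_self_eq_zero (x i t)

lemma caSub_mem {q : ℕ} {x : ℤ → ℕ → ZMod 2} (hx : x ∈ CAcode (2 ^ (q + 1))) (r : ℤ) {e : ℕ}
    (he : e ≤ 1) : caSub x r e ∈ CAcode (2 ^ q) := by
  have hL : 2 ^ (q + 1) = 2 * 2 ^ q := by ring
  refine ⟨?_, ?_, ?_⟩
  · exact Set.Finite.of_finite_image (hx.1.subset (image_caSub_subset x r e))
      (caEmb_injective r e).injOn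
  · intro i s hs
    have h := two_step hx (2 * i + r) (2 * s + e) (by omega)
    by_cases hp : Even (i + ((s + 1 : ℕ) : ℤ))
    · have h1 : Even (i - 1 + (s : ℤ)) := by
        push_cast at hp
        rw [Int.even_iff] at *
        omega
      have h2 : Even (i + 1 + (s : ℤ)) := by
        push_cast at hp
        rw [Int.even_iff] at *
        omega
      simp only [caSub, if_pos hp, if_pos h1, if_pos h2]
      rw [show 2 * (s + 1) + e = 2 * s + e + 2 by ring, h]
      congr 2 <;> ring
    · have h1 : ¬ Even (i - 1 + (s : ℤ)) := by
        push_cast at hp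
        rw [Int.even_iff] at *
        omega
      have h2 : ¬ Even (i + 1 + (s : ℤ)) := by
        push_cast at hp
        rw [Int.even_iff] at *
        omega
      simp only [caSub, if_neg hp, if_neg h1, if_neg h2, add_zero]
  · intro i s hs
    simp only [caSub]
    split_ifs
    · exact hx.2.2 _ _ (by omega)
    · rfl

lemma disjoint_image_caSub (x : ℤ → ℕ → ZMod 2) {r r' : ℤ} {e e' : ℕ} (he : e ≤ 1) (he' : e' ≤ 1)
    (h : e ≠ e' ∨ r' = r + 2) :
    Disjoint (caEmb r e '' caSupp (caSub x r e)) (caEmb r' e' '' caSupp (caSub x r' e')) := by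
  rw [Set.disjoint_left]
  rintro _ ⟨u, hu, rfl⟩ ⟨v, hv, huv⟩
  have h1 := (mem_caSupp_caSub hu).1
  have h2 := (mem_caSupp_caSub hv).1
  simp only [caEmb, Prod.mk.injEq] at huv
  rw [Int.even_iff] at h1 h2
  omega

lemma sum_ncard_caSub_le {x : ℤ → ℕ → ZMod 2} (hx : (caSupp x).Finite) (r : ℤ) :
    (caSupp (caSub x r 0)).ncard + (caSupp (caSub x (r + 2) 0)).ncard +
      ((caSupp (caSub x (r - 1) 1)).ncard + (caSupp (caSub x (r + 1) 1)).ncard) ≤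
        (caSupp x).ncard := by
  have hf : ∀ r e, (caEmb r e '' caSupp (caSub x r e)).Finite :=
    fun r e => hx.subset (image_caSub_subset x r e)
  simp only [← fun r e => Set.ncard_image_of_injective (caSupp (caSub x r e)) (caEmb_injective r e)]
  rw [← Set.ncard_union_eq (disjoint_image_caSub x (by simp) (by simp) (by simp)) (hf _ _) (hf _ _),
    ← Set.ncard_union_eq
      (disjoint_image_caSub x (by simp) (by simp) (Or.inr (by ring))) (hf _ _) (hf _ _),
    ← Set.ncard_union_eq _ ((hf _ _).union (hf _ _)) ((hf _ _).union (hf _ _))]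
  · refine Set.ncard_le_ncard ?_ hx
    simp only [Set.union_subset_iff]
    exact ⟨⟨image_caSub_subset _ _ _, image_caSub_subset _ _ _⟩,
      image_caSub_subset _ _ _, image_caSub_subset _ _ _⟩
  · simp only [Set.disjoint_union_left, Set.disjoint_union_right]
    refine ⟨⟨?_, ?_⟩, ?_, ?_⟩ <;> exact disjoint_image_caSub x (by simp) (by simp) (by simp)

/-- The initial row determines a codeword, so it is nonzero for a nonzero codeword. -/
lemma exists_row_zero {L : ℕ} {x : ℤ → ℕ → ZMod 2} (hx : x ∈ CAcode L) (h0 : x ≠ 0) :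
    ∃ i, x i 0 ≠ 0 := by
  by_contra! h
  apply h0
  funext i t
  induction t generalizing i with
  | zero => exact h i
  | succ t ih =>
    by_cases ht : t + 2 ≤ L
    · rw [hx.2.1 i t ht, ih, ih]; simp
    · exact hx.2.2 _ _ (by omega)

lemma caSub_eq_zero {x : ℤ → ℕ → ZMod 2} {r : ℤ} {e : ℕ} (h : caSub x r e = 0) (k : ℤ) :
    x (4 * k + r) e = 0 := by
  have := congrFun (congrFun h (2 * k)) 0
  simp only [caSub] at this
  rw [if_pos (by simp)] at this
  rw [show 4 * k + r = 2 * (2 * k) + r by ring]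
  simpa using this

/-- The orbit of a single live site at the origin. -/
def caOrbit : ℕ → ℤ → ZMod 2
  | 0 => fun i => if i = 0 then 1 else 0
  | t + 1 => fun i => caOrbit t (i - 1) + caOrbit t (i + 1)

/-- Light cone of the orbit. -/
lemma caOrbit_eq_zero (t : ℕ) (i : ℤ) (h : (t : ℤ) < |i|) : caOrbit t i = 0 := by
  induction t generalizing i with
  | zero =>
    have : i ≠ 0 := by rintro rfl; simp at h
    simp [caOrbit, this]
  | succ t ih =>
    push_cast at h
    simp only [caOrbit]
    rw [ih (i - 1) (by grind), ih (i + 1) (by grind), add_zero]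

lemma exists_codeword (L : ℕ) (hL : 0 < L) : ∃ x ∈ CAcode L, x ≠ 0 := by
  refine ⟨fun i t => if t < L then caOrbit t i else 0, ⟨?_, ?_, ?_⟩, ?_⟩
  · refine ((Set.finite_Icc (-(L : ℤ)) L).prod (Set.finite_Iio L)).subset ?_
    rintro ⟨i, t⟩ h
    simp only [ne_eq, Set.mem_ofPred_eq, ite_eq_right_iff, Classical.not_imp] at h
    obtain ⟨h1, h2⟩ := h
    have h3 : |i| ≤ t := by
      by_contra h3
      exact h2 (caOrbit_eq_zero t i (by omega))
    rw [abs_le] at h3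
    simp only [Set.mem_prod, Set.mem_Icc, Set.mem_Iio]
    omega
  · intro i t ht
    simp only [if_pos (show t + 1 < L by omega), if_pos (show t < L by omega)]
    rfl
  · intro i t ht
    simp only [if_neg (show ¬ t < L by omega)]
  · intro h
    have := congrFun (congrFun h 0) 0
    simp [hL, caOrbit] at this

lemma caDist_le {q : ℕ} {y : ℤ → ℕ → ZMod 2} (hy : y ∈ CAcode (2 ^ q)) (h0 : y ≠ 0) :
    caDist q ≤ (caSupp y).ncard :=
  Nat.sInf_le ⟨y, hy, h0, rfl⟩

lemma three_mul_le_ncard {q : ℕ} {x : ℤ → ℕ → ZMod 2} (hx : x ∈ CAcode (2 ^ (q + 1)))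
    (h0 : x ≠ 0) : 3 * caDist q ≤ (caSupp x).ncard := by
  obtain ⟨r, hr⟩ := exists_row_zero hx h0
  have hL : 0 + 2 ≤ 2 ^ (q + 1) := by
    have := Nat.one_le_two_pow (n := q)
    rw [pow_succ]; omega
  have row1 : ∀ i, x i 1 = x (i - 1) 0 + x (i + 1) 0 := fun i => hx.2.1 i 0 hL
  have hsum := sum_ncard_caSub_le hx.1 r
  have hA : caSub x r 0 ≠ 0 := fun h => hr (by simpa using caSub_eq_zero h 0)
  have hBC : caSub x (r + 2) 0 = 0 → caSub x (r + 1) 1 ≠ 0 := by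
    intro hB hC
    have h1 := caSub_eq_zero hB 0
    have h2 := caSub_eq_zero hC 0
    rw [row1] at h2
    ring_nf at h1 h2
    rw [h1] at h2
    exact hr (by simpa using h2)
  have hBD : caSub x (r + 2) 0 = 0 → caSub x (r - 1) 1 ≠ 0 := by
    intro hB hD
    have h1 := caSub_eq_zero hB (-1)
    have h2 := caSub_eq_zero hD 0
    rw [row1] at h2
    ring_nf at h1 h2
    rw [h1] at h2
    exact hr (by simpa using h2)
  have hCD : caSub x (r + 1) 1 = 0 → caSub x (r - 1) 1 ≠ 0 := by
    intro hC hD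
    -- The values `x (4 * k + r) 0` do not depend on `k`, so the support is infinite.
    have hper : ∀ k : ℕ, x (4 * (k : ℤ) + r) 0 ≠ 0 := by
      intro k
      induction k with
      | zero => simpa using hr
      | succ k ih =>
        have h1 := caSub_eq_zero hC k
        have h2 := caSub_eq_zero hD (k + 1)
        rw [row1] at h1 h2
        rw [show 4 * (k : ℤ) + (r + 1) - 1 = 4 * k + r by ring,
          show 4 * (k : ℤ) + (r + 1) + 1 = 4 * k + r + 2 by ring] at h1
        rw [show 4 * ((k : ℤ) + 1) + (r - 1) - 1 = 4 * k + r + 2 by ring,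
          show 4 * ((k : ℤ) + 1) + (r - 1) + 1 = 4 * ((k + 1 : ℕ) : ℤ) + r by push_cast; ring] at h2
        rw [CharTwo.add_eq_zero] at h1 h2
        rwa [← h2, ← h1]
    refine Set.infinite_of_injective_forall_mem (f := fun k : ℕ => ((4 * (k : ℤ) + r, 0) : ℤ × ℕ))
      ?_ hper hx.1
    intro a b hab
    simp only [Prod.mk.injEq] at hab
    omega
  have key : ∀ (s : ℤ) (e : ℕ), e ≤ 1 → caSub x s e ≠ 0 →
      caDist q ≤ (caSupp (caSub x s e)).ncard :=
    fun s e he h => caDist_le (caSub_mem hx s he) h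
  have kA := key r 0 (by simp) hA
  have kB := key (r + 2) 0 (by simp)
  have kC := key (r + 1) 1 le_rfl
  have kD := key (r - 1) 1 le_rfl
  by_cases hB : caSub x (r + 2) 0 = 0
  · have := kC (hBC hB)
    have := kD (hBD hB)
    omega
  · have := kB hB
    by_cases hC : caSub x (r + 1) 1 = 0
    · have := kD (hCD hC)
      omega
    · have := kC hC
      omega

/-- The recursive step in Lemma 3: `d(p) ≥ 3·d(p-1)`. -/
theorem caDist_ge (p : ℕ) (hp : 1 ≤ p) : 3 * caDist (p - 1) ≤ caDist p := by
  obtain ⟨q, rfl⟩ : ∃ q, p = q + 1 := ⟨p - 1, by omega⟩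
  rw [Nat.add_sub_cancel]
  obtain ⟨y, hy, hy0⟩ := exists_codeword (2 ^ (q + 1)) (by positivity)
  refine le_csInf ⟨_, y, hy, hy0, rfl⟩ ?_
  rintro _ ⟨x, hx, hx0, rfl⟩
  exact three_mul_le_ncard hx hx0
end

section
/- Let p ≥ 1 and L = 2^p, and partition the even sublattice Λ₀ = {(i,t) ∈ ℤ × {0,…,L−1} : i + t even} into the four sets A = {(i,t) ∈ Λ₀ : i+t ≡ 0 (mod 4), t even}, B = {(i,t) ∈ Λ₀ : i+t ≡ 2 (mod 4), t even}, C = {(i,t) ∈ Λ₀ : i+t ≡ 0 (mod 4), t odd}, D = {(i,t) ∈ Λ₀ : i+t ≡ 2 (mod 4), t odd}. Then every nonzero codeword x ∈ C_∞^L whose support is contained in Λ₀ has nonzero restriction to at least three of the four sets A, B, C, D. -/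
/-- A configuration with zero initial row vanishes, as row `0` determines all the others. -/
lemma CAcode.exists_row_zero_ne {L : ℕ} {x : ℤ → ℕ → ZMod 2} (hx : x ∈ CAcode L) (hx0 : x ≠ 0) :
    ∃ i, x i 0 ≠ 0 := by
  obtain ⟨-, hrec, hz⟩ := hx
  by_contra! h
  apply hx0
  have key : ∀ t i, x i t = 0 := by
    intro t
    induction t with
    | zero => exact h
    | succ t ih =>
      intro i
      by_cases ht : t + 2 ≤ L
      · rw [hrec i t ht, ih, ih, add_zero]
      · exact hz i _ (by omega)
  funext i t
  exact key t i

/-- The rightmost site of a nonzero row `0`. -/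
lemma CAcode.exists_rightmost {L : ℕ} {x : ℤ → ℕ → ZMod 2} (hx : x ∈ CAcode L) (hx0 : x ≠ 0) :
    ∃ m, x m 0 ≠ 0 ∧ ∀ j, m < j → x j 0 = 0 := by
  obtain ⟨i, hi⟩ := exists_row_zero_ne hx hx0
  have hfin : {j : ℤ | x j 0 ≠ 0}.Finite :=
    hx.1.preimage (f := fun j : ℤ => (j, 0)) (fun a _ b _ hab => congrArg Prod.fst hab)
  obtain ⟨m, hm, hmax⟩ := Set.exists_max_image _ id hfin ⟨i, hi⟩
  refine ⟨m, hm, fun j hj => ?_⟩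
  by_contra hne
  exact absurd (hmax j hne) (not_le.mpr hj)

/-- **Sublattice occupation.** Partition the even sublattice
`Λ₀ = {(i,t) : i + t even}` of `ℤ × {0,…,2^p−1}` into the four sets
`A = {i+t ≡ 0 (4), t even}`, `B = {i+t ≡ 2 (4), t even}`,
`C = {i+t ≡ 0 (4), t odd}`, `D = {i+t ≡ 2 (4), t odd}`.
Every nonzero codeword of `C_∞^{2^p}` supported on `Λ₀` has nonzero restriction to
at least three of the four sets. -/
theorem three_of_four_sublattices (p : ℕ) (hp : 1 ≤ p)
    (x : ℤ → ℕ → ZMod 2) (hx : x ∈ CAcode (2 ^ p)) (hx0 : x ≠ 0)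
    (heven : ∀ (i : ℤ) (t : ℕ), x i t ≠ 0 → (i + (t : ℤ)) % 2 = 0) :
    letI PA := ∃ (i : ℤ) (t : ℕ), x i t ≠ 0 ∧ (i + (t : ℤ)) % 4 = 0 ∧ Even t
    letI PB := ∃ (i : ℤ) (t : ℕ), x i t ≠ 0 ∧ (i + (t : ℤ)) % 4 = 2 ∧ Even t
    letI PC := ∃ (i : ℤ) (t : ℕ), x i t ≠ 0 ∧ (i + (t : ℤ)) % 4 = 0 ∧ Odd t
    letI PD := ∃ (i : ℤ) (t : ℕ), x i t ≠ 0 ∧ (i + (t : ℤ)) % 4 = 2 ∧ Odd t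
    (PA ∧ PB ∧ PC) ∨ (PA ∧ PB ∧ PD) ∨ (PA ∧ PC ∧ PD) ∨ (PB ∧ PC ∧ PD) := by
  have hL : 0 + 2 ≤ 2 ^ p := by
    simpa using Nat.pow_le_pow_right (show 0 < 2 by norm_num) hp
  obtain ⟨m, hm, hmax⟩ := CAcode.exists_rightmost hx hx0
  have hm2 := heven m 0 hm
  have hright : x (m + 1) 1 = x m 0 + x (m + 2) 0 := by
    have h := hx.2.1 (m + 1) 0 hL
    rwa [show m + 1 - 1 = m by ring, show m + 1 + 1 = m + 2 by ring] at h
  have hleft : x (m - 1) 1 = x (m - 2) 0 + x m 0 := by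
    have h := hx.2.1 (m - 1) 0 hL
    rwa [show m - 1 - 1 = m - 2 by ring, show m - 1 + 1 = m by ring] at h
  have hr : x (m + 1) 1 ≠ 0 := by
    rw [hright, hmax (m + 2) (by omega), add_zero]
    exact hm
  have hl : x (m - 2) 0 = 0 → x (m - 1) 1 ≠ 0 := by
    intro h
    rw [hleft, h, zero_add]
    exact hm
  push_cast at hm2
  rcases (by omega : m % 4 = 0 ∨ m % 4 = 2) with h4 | h4
  · have hA : ∃ (i : ℤ) (t : ℕ), x i t ≠ 0 ∧ (i + (t : ℤ)) % 4 = 0 ∧ Even t :=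
      ⟨m, 0, hm, by push_cast; omega, by decide⟩
    have hD : ∃ (i : ℤ) (t : ℕ), x i t ≠ 0 ∧ (i + (t : ℤ)) % 4 = 2 ∧ Odd t :=
      ⟨m + 1, 1, hr, by push_cast; omega, by decide⟩
    by_cases h : x (m - 2) 0 = 0
    · exact Or.inr (Or.inr (Or.inl ⟨hA, ⟨m - 1, 1, hl h, by push_cast; omega, by decide⟩, hD⟩))
    · exact Or.inr (Or.inl ⟨hA, ⟨m - 2, 0, h, by push_cast; omega, by decide⟩, hD⟩)
  · have hB : ∃ (i : ℤ) (t : ℕ), x i t ≠ 0 ∧ (i + (t : ℤ)) % 4 = 2 ∧ Even t :=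
      ⟨m, 0, hm, by push_cast; omega, by decide⟩
    have hC : ∃ (i : ℤ) (t : ℕ), x i t ≠ 0 ∧ (i + (t : ℤ)) % 4 = 0 ∧ Odd t :=
      ⟨m + 1, 1, hr, by push_cast; omega, by decide⟩
    by_cases h : x (m - 2) 0 = 0
    · exact Or.inr (Or.inr (Or.inr ⟨hB, hC, ⟨m - 1, 1, hl h, by push_cast; omega, by decide⟩⟩))
    · exact Or.inl ⟨⟨m - 2, 0, h, by push_cast; omega, by decide⟩, hB, hC⟩
end

section
/- Define e : ℕ → (ℤ → 𝔽₂) by letting e₀ be the indicator function of {0} and e_{t+1}(i) = e_t(i−1) + e_t(i+1) for all i ∈ ℤ. Then for every p ≥ 0, the total weight ∑_{t=0}^{2^p − 1} |supp(e_t)| equals 3^p; equivalently, the codeword of C_∞^{2^p} whose row t is e_t (the trajectory started from a single active cell) has Hamming weight 3^p, so in particular d(p) ≤ 3^p. -/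
/-- The Frobenius identity for the automaton, valid for any starting row. -/
lemma ca_shift (e : ℕ → ℤ → ZMod 2)
    (hrec : ∀ (t : ℕ) (i : ℤ), e (t + 1) i = e t (i - 1) + e t (i + 1))
    (k t : ℕ) (i : ℤ) : e (t + 2 ^ k) i = e t (i - 2 ^ k) + e t (i + 2 ^ k) := by
  induction k generalizing t i with
  | zero => simpa using hrec t i
  | succ k ih =>
    have h1 : t + 2 ^ (k + 1) = (t + 2 ^ k) + 2 ^ k := by ring
    have h2 : i - 2 ^ (k + 1) = i - 2 ^ k - 2 ^ k := by ring
    have h3 : i + 2 ^ (k + 1) = i + 2 ^ k + 2 ^ k := by ring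
    rw [h1, h2, h3, ih, ih, ih, sub_add_cancel, add_sub_cancel_right]
    -- the two middle terms `e t i` cancel
    linear_combination CharTwo.add_self_eq_zero (e t i)

lemma ca_light_cone (e : ℕ → ℤ → ZMod 2)
    (h0 : ∀ i : ℤ, e 0 i = if i = 0 then 1 else 0)
    (hrec : ∀ (t : ℕ) (i : ℤ), e (t + 1) i = e t (i - 1) + e t (i + 1))
    (t : ℕ) (i : ℤ) (hi : e t i ≠ 0) : -(t : ℤ) ≤ i ∧ i ≤ t := by
  induction t generalizing i with
  | zero =>
    rw [h0] at hi
    have : i = 0 := by by_contra h; simp [h] at hi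
    simp [this]
  | succ t ih =>
    rw [hrec] at hi
    push_cast
    by_cases h : e t (i - 1) = 0
    · have := ih (i + 1) (by simpa [h] using hi)
      omega
    · have := ih (i - 1) h
      omega

lemma ca_row_finite (e : ℕ → ℤ → ZMod 2)
    (h0 : ∀ i : ℤ, e 0 i = if i = 0 then 1 else 0)
    (hrec : ∀ (t : ℕ) (i : ℤ), e (t + 1) i = e t (i - 1) + e t (i + 1))
    (t : ℕ) : {i : ℤ | e t i ≠ 0}.Finite :=
  (Set.finite_Icc (-(t : ℤ)) t).subset fun i hi => ca_light_cone e h0 hrec t i hi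

lemma ca_row_weight_double (e : ℕ → ℤ → ZMod 2)
    (h0 : ∀ i : ℤ, e 0 i = if i = 0 then 1 else 0)
    (hrec : ∀ (t : ℕ) (i : ℤ), e (t + 1) i = e t (i - 1) + e t (i + 1))
    (k t : ℕ) (ht : t < 2 ^ k) :
    {i : ℤ | e (t + 2 ^ k) i ≠ 0}.ncard = 2 * {i : ℤ | e t i ≠ 0}.ncard := by
  have hfin := ca_row_finite e h0 hrec t
  have htz : (t : ℤ) < 2 ^ k := by exact_mod_cast ht
  have hcone := ca_light_cone e h0 hrec t
  have hU : {i : ℤ | e (t + 2 ^ k) i ≠ 0} =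
      (fun j => j + 2 ^ k) '' {i : ℤ | e t i ≠ 0} ∪
        (fun j => j - 2 ^ k) '' {i : ℤ | e t i ≠ 0} := by
    ext i
    rw [Set.mem_ofPred_eq, ca_shift e hrec]
    constructor
    · intro hi
      by_cases h : e t (i - 2 ^ k) = 0
      · exact Or.inr ⟨i + 2 ^ k, by simpa [h] using hi, by simp⟩
      · exact Or.inl ⟨i - 2 ^ k, h, by simp⟩
    · rintro (⟨j, hj, rfl⟩ | ⟨j, hj, rfl⟩)
      · have hz : e t (j + 2 ^ k + 2 ^ k) = 0 := by
          by_contra h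
          have := hcone _ h
          have := hcone _ hj
          omega
        simpa [hz] using hj
      · have hz : e t (j - 2 ^ k - 2 ^ k) = 0 := by
          by_contra h
          have := hcone _ h
          have := hcone _ hj
          omega
        simpa [hz] using hj
  have hdisj : Disjoint ((fun j : ℤ => j + 2 ^ k) '' {i : ℤ | e t i ≠ 0})
      ((fun j : ℤ => j - 2 ^ k) '' {i : ℤ | e t i ≠ 0}) := by
    rw [Set.disjoint_left]
    rintro _ ⟨j, hj, rfl⟩ ⟨l, hl, h⟩
    have := hcone _ hj
    have := hcone _ hl
    dsimp only at h
    omega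
  rw [hU, Set.ncard_union_eq hdisj (hfin.image _) (hfin.image _),
    Set.ncard_image_of_injective _ (add_left_injective _),
    Set.ncard_image_of_injective _ (sub_left_injective), two_mul]

lemma ca_sum_weight (e : ℕ → ℤ → ZMod 2)
    (h0 : ∀ i : ℤ, e 0 i = if i = 0 then 1 else 0)
    (hrec : ∀ (t : ℕ) (i : ℤ), e (t + 1) i = e t (i - 1) + e t (i + 1))
    (p : ℕ) : (∑ t ∈ Finset.range (2 ^ p), {i : ℤ | e t i ≠ 0}.ncard) = 3 ^ p := by
  induction p with
  | zero =>
    have : {i : ℤ | e 0 i ≠ 0} = {0} := by ext i; simp [h0]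
    simp [this]
  | succ p ih =>
    have h : ∑ t ∈ Finset.range (2 ^ p), {i : ℤ | e (2 ^ p + t) i ≠ 0}.ncard =
        ∑ t ∈ Finset.range (2 ^ p), 2 * {i : ℤ | e t i ≠ 0}.ncard :=
      Finset.sum_congr rfl fun t ht => by
        rw [add_comm]
        exact ca_row_weight_double e h0 hrec p t (Finset.mem_range.1 ht)
    rw [pow_succ, mul_two, Finset.sum_range_add, h, ← Finset.mul_sum, ih]
    ring

/-- The weight of a space-time configuration truncated to `L` rows, counted row by row. -/
lemma ca_truncation_weight (e : ℕ → ℤ → ZMod 2)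
    (hfin : ∀ t, {i : ℤ | e t i ≠ 0}.Finite) (L : ℕ) :
    {r : ℤ × ℕ | (if r.2 < L then e r.2 r.1 else 0) ≠ 0}.Finite ∧
    {r : ℤ × ℕ | (if r.2 < L then e r.2 r.1 else 0) ≠ 0}.ncard =
      ∑ t ∈ Finset.range L, {i : ℤ | e t i ≠ 0}.ncard := by
  classical
  have hS : {r : ℤ × ℕ | (if r.2 < L then e r.2 r.1 else 0) ≠ 0} =
      ↑(((Finset.range L).sigma fun t => (hfin t).toFinset).map
        ((Equiv.sigmaEquivProd ℕ ℤ).trans (Equiv.prodComm ℕ ℤ)).toEmbedding) := by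
    ext ⟨i, t⟩
    simp
  rw [hS]
  refine ⟨Finset.finite_toSet _, ?_⟩
  rw [Set.ncard_coe_finset, Finset.card_map, Finset.card_sigma]
  exact Finset.sum_congr rfl fun t _ => (Set.ncard_eq_toFinset_card _ (hfin t)).symm

/-- **Sierpinski-triangle weight.** Let `e t : ℤ → 𝔽₂` be the trajectory of the rule
`x_i → x_{i-1} ⊕ x_{i+1}` started from a single active cell. Then the total weight of
the first `2^p` rows is `3^p`; equivalently, the codeword of `C_∞^{2^p}` whose row `t`
is `e t` lies in the code and has Hamming weight `3^p`, so `d(p) ≤ 3^p`. -/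
theorem ca_single_cell_weight (e : ℕ → ℤ → ZMod 2)
    (h0 : ∀ i : ℤ, e 0 i = if i = 0 then 1 else 0)
    (hrec : ∀ (t : ℕ) (i : ℤ), e (t + 1) i = e t (i - 1) + e t (i + 1))
    (p : ℕ) :
    (∑ t ∈ Finset.range (2 ^ p), {i : ℤ | e t i ≠ 0}.ncard) = 3 ^ p ∧
    (fun (i : ℤ) (t : ℕ) => if t < 2 ^ p then e t i else 0) ∈ CAcode (2 ^ p) ∧
    {r : ℤ × ℕ | (if r.2 < 2 ^ p then e r.2 r.1 else 0) ≠ 0}.ncard = 3 ^ p ∧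
    caDist p ≤ 3 ^ p := by
  have hsum := ca_sum_weight e h0 hrec p
  obtain ⟨hF, hcard⟩ := ca_truncation_weight e (ca_row_finite e h0 hrec) (2 ^ p)
  have hmem : (fun (i : ℤ) (t : ℕ) => if t < 2 ^ p then e t i else 0) ∈ CAcode (2 ^ p) := by
    refine ⟨hF, fun i t ht => ?_, fun i t ht => if_neg (by omega)⟩
    simp only [if_pos (show t + 1 < 2 ^ p by omega), if_pos (show t < 2 ^ p by omega)]
    exact hrec t i
  refine ⟨hsum, hmem, hcard.trans hsum, Nat.sInf_le ⟨_, hmem, fun h => ?_, hcard.trans hsum⟩⟩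
  have := congrFun (congrFun h 0) 0
  simp [h0] at this
end

section
/- Let L be an odd positive integer and define the 𝔽₂-linear map T on functions ZMod L → 𝔽₂ by (T x)(i) = x(i−1) + x(i+1). Then T x = 0 if and only if x = 0 or x is the constant function 1; that is, the kernel of T consists exactly of the zero function and the all-ones function. -/
/-!
Over `ZMod 2`, `x (i - 1) + x (i + 1) = 0` means `x (i - 1) = x (i + 1)`, so the kernel consists
of the functions invariant under translation by `2`. As `L` is odd, `2` generates `ZMod L`, so
these are exactly the constant functions, of which there are two.
-/

/-- **Kernel of the transition map on an odd cycle.** For odd `L`, the one-step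
transition map `T` of the linear cellular automaton `x_i → x_{i-1} ⊕ x_{i+1}` on a
cycle of length `L`, `(T x) i = x (i-1) + x (i+1)`, has kernel consisting exactly of
the zero function and the all-ones function. -/
theorem ca_transition_kernel (L : ℕ) (hL : 0 < L) (hodd : Odd L)
    (x : ZMod L → ZMod 2) :
    (fun i : ZMod L => x (i - 1) + x (i + 1)) = 0 ↔
      x = 0 ∨ x = fun _ => 1 := by
  constructor
  · intro h
    -- In characteristic 2 the kernel equation says that `x` is 2-periodic.
    have hper : ∀ j, x (j + 2) = x j := fun j => by
      have hj : x (j + 1 - 1) + x (j + 1 + 1) = 0 := congrFun h (j + 1)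
      rw [add_sub_cancel_right, add_assoc, one_add_one_eq_two] at hj
      exact (CharTwo.add_eq_zero.mp hj).symm
    have heven : ∀ n : ℕ, x (n * 2) = x 0 := fun n => by
      induction n with
      | zero => simp
      | succ n ih => rw [Nat.cast_succ, add_one_mul, hper, ih]
    have : NeZero L := ⟨hL.ne'⟩
    obtain ⟨k, hk⟩ := hodd
    -- Since `L = 2k + 1`, the inverse of 2 modulo `L` is `k + 1`.
    have hinv : ((k : ZMod L) + 1) * 2 = 1 := by
      have h0 : ((2 * k + 1 : ℕ) : ZMod L) = 0 := by rw [← hk]; exact ZMod.natCast_self L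
      push_cast at h0
      linear_combination h0
    have hconst : ∀ i, x i = x 0 := fun i => by
      rw [← heven (i.val * (k + 1))]
      congr 1
      push_cast
      rw [ZMod.natCast_zmod_val, mul_assoc, hinv, mul_one]
    have h01 : ∀ a : ZMod 2, a = 0 ∨ a = 1 := by decide
    exact (h01 (x 0)).imp (fun h0 => funext fun i => (hconst i).trans h0)
      (fun h1 => funext fun i => (hconst i).trans h1)
  · rintro (rfl | rfl)
    · ext i; simp
    · exact funext fun _ => CharTwo.add_self_eq_zero (1 : ZMod 2)
end

section
/- For every odd positive integer L, distinct codewords of C_L^L have distinct restrictions to every time slice: if x, y ∈ C_L^L and there exists t ∈ {0,…,L−1} such that x(i,t) = y(i,t) for all i ∈ ZMod L, then x = y. -/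
/-!
By linearity it suffices that a codeword `z` with a vanishing row is zero. The rule propagates zero
rows forward in time, so the point is to propagate them backward (`row_eq_zero_of_succ`).
If row `t + 1` vanishes, then row `t` is invariant under translation by `2`, hence constant, as `2`
generates `ZMod L` for odd `L`. The constant is zero: for `t = 0` by the constraint `z(0,0) = 0`,
and for `t > 0` because row `t` is an image of the rule, so its entries sum to zero
(each entry of the previous row is counted twice), whereas a constant row `c` sums to `L * c = c`.
-/

/-- The code `C_L^L`: `𝔽₂`-valued configurations on `ZMod L × {0,…,L-1}` satisfying
the cellular-automaton rule `x(i,t+1) = x(i-1,t) + x(i+1,t)` for `0 ≤ t ≤ L-2`,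
together with the constraint `x(0,0) = 0`. It is an `𝔽₂`-subspace. -/
def CLcode (L : ℕ) (hL : 0 < L) : Submodule (ZMod 2) (ZMod L × Fin L → ZMod 2) where
  carrier := {x |
    (∀ (i : ZMod L) (t : ℕ) (h : t + 1 < L),
      x (i, ⟨t + 1, h⟩) =
        x (i - 1, ⟨t, Nat.lt_of_succ_lt h⟩) + x (i + 1, ⟨t, Nat.lt_of_succ_lt h⟩)) ∧
    x (0, ⟨0, hL⟩) = 0}
  add_mem' := by
    rintro x y ⟨hx1, hx2⟩ ⟨hy1, hy2⟩
    refine ⟨fun i t h => ?_, ?_⟩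
    · simp only [Pi.add_apply, hx1 i t h, hy1 i t h]
      ring
    · simp only [Pi.add_apply, hx2, hy2, add_zero]
  zero_mem' := by
    refine ⟨fun i t h => ?_, rfl⟩
    simp
  smul_mem' := by
    rintro c x ⟨hx1, hx2⟩
    refine ⟨fun i t h => ?_, ?_⟩
    · simp only [Pi.smul_apply, hx1 i t h, smul_eq_mul, mul_add]
    · simp only [Pi.smul_apply, hx2, smul_eq_mul, mul_zero]

/-- A function on `ZMod L`, `L` odd, which is invariant under translation by `2` is constant. -/
lemma eq_apply_zero_of_shift_two {L : ℕ} [NeZero L] (hodd : Odd L) {α : Type*} (a : ZMod L → α)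
    (h : ∀ i, a (i + 2) = a i) (i : ZMod L) : a i = a 0 := by
  have key : ∀ n : ℕ, a (2 * (n : ZMod L)) = a 0 := by
    intro n
    induction n with
    | zero => simp
    | succ n ih => rw [← ih, ← h (2 * (n : ZMod L))]; push_cast; ring_nf
  obtain ⟨k, hk⟩ := hodd
  have h0 : (2 * (k : ZMod L) + 1) = 0 := by
    have hc : (L : ZMod L) = ((2 * k + 1 : ℕ) : ZMod L) := congrArg _ hk
    rw [ZMod.natCast_self] at hc
    exact_mod_cast hc.symm
  -- `k + 1` is the inverse of `2` modulo `L = 2 * k + 1`.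
  have hi : i = 2 * (((k + 1) * i.val : ℕ) : ZMod L) := by
    push_cast
    rw [ZMod.natCast_zmod_val]
    linear_combination (-i) * h0
  rw [hi]
  exact key _

lemma sum_shift_add_shift {L : ℕ} [NeZero L] (b : ZMod L → ZMod 2) :
    ∑ i, (b (i - 1) + b (i + 1)) = 0 := by
  have h1 : ∑ i, b (i - 1) = ∑ i, b i := Equiv.sum_comp (Equiv.subRight (1 : ZMod L)) b
  have h2 : ∑ i, b (i + 1) = ∑ i, b i := Equiv.sum_comp (Equiv.addRight (1 : ZMod L)) b
  rw [Finset.sum_add_distrib, h1, h2]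
  exact CharTwo.add_self_eq_zero _

/-- Zero rows of a codeword propagate backward in time. -/
lemma row_eq_zero_of_succ {L : ℕ} (hL : 0 < L) (hodd : Odd L) {z : ZMod L × Fin L → ZMod 2}
    (hz : z ∈ CLcode L hL) (t : ℕ) (ht : t + 1 < L) (h : ∀ i, z (i, ⟨t + 1, ht⟩) = 0)
    (i : ZMod L) : z (i, ⟨t, Nat.lt_of_succ_lt ht⟩) = 0 := by
  obtain ⟨hrule, h00⟩ := hz
  have : NeZero L := ⟨hL.ne'⟩
  have hconst := eq_apply_zero_of_shift_two hodd
    (fun i => z (i, ⟨t, Nat.lt_of_succ_lt ht⟩)) (fun i => by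
      have h1 := hrule (i + 1) t ht
      rw [h, add_sub_cancel_right, add_assoc, one_add_one_eq_two] at h1
      exact (CharTwo.add_eq_zero.mp h1.symm).symm)
  rw [hconst]
  cases t with
  | zero => exact h00
  | succ s =>
    have hs := sum_shift_add_shift (fun i => z (i, ⟨s, by omega⟩))
    simp only [← hrule _ s (Nat.lt_of_succ_lt ht)] at hs
    rw [Finset.sum_congr rfl (fun i _ => hconst i)] at hs
    -- `L` is odd, so it is `1` in `ZMod 2`.
    simpa [ZMod.card, (ZMod.natCast_eq_one_iff_odd (n := L)).mpr hodd] using hs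

/-- For odd `L`, distinct codewords of `C_L^L` have distinct restrictions to every
time slice: if two codewords agree on some row `t`, they are equal. -/
theorem CLcode_slice_injective (L : ℕ) (hL : 0 < L) (hodd : Odd L)
    (x y : ZMod L × Fin L → ZMod 2)
    (hx : x ∈ CLcode L hL) (hy : y ∈ CLcode L hL)
    (hslice : ∃ t : Fin L, ∀ i : ZMod L, x (i, t) = y (i, t)) :
    x = y := by
  obtain ⟨⟨t, ht⟩, hslice⟩ := hslice
  have hz := Submodule.sub_mem _ hx hy
  rw [← sub_eq_zero]
  generalize hzdef : x - y = z at hz ⊢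
  have hzt : ∀ i, z (i, ⟨t, ht⟩) = 0 := fun i => by
    rw [← hzdef, Pi.sub_apply, hslice, sub_self]
  have hz0 : ∀ i, z (i, ⟨0, hL⟩) = 0 := by
    clear hslice
    induction t with
    | zero => exact hzt
    | succ t ih => exact ih _ (row_eq_zero_of_succ hL hodd hz t ht hzt)
  have hall : ∀ (s : ℕ) (hs : s < L) (i : ZMod L), z (i, ⟨s, hs⟩) = 0 := by
    intro s
    induction s with
    | zero => exact fun _ => hz0
    | succ s ih =>
      intro hs i
      rw [hz.1 i s hs, ih, ih, add_zero]
  funext ⟨i, s, hs⟩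
  exact hall s hs i
end
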